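/- Let 𝒲 be a Banach space with a Schauder basis and let α be a countable ordinal. Then there is a block subspace 𝒳 = [x_n] ⊆ 𝒲 that is either ω·α-tight or (α+1)-minimal. -/

import Mathlib

open Filter Topology

namespace Rosendal

variable {𝒲 : Type} [NormedAddCommGroup 𝒲] [NormedSpace ℝ 𝒲]

/-- `(e n)` is a Schauder basis of the Banach space `𝒲`: every vector has a unique
representation as a norm-convergent series `∑ a n • e n`. -/
def IsSchauderBasis (e : ℕ → 𝒲) : Prop :=
  ∀ x : 𝒲, ∃! a : ℕ → ℝ,
    Tendsto (fun N => ∑ i ∈ Finset.range N, a i • e i) atTop (𝓝 x)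

/-- `x` is a linear combination of the vectors `b i`, `i ∈ s`. -/
def SuppIn (b : ℕ → 𝒲) (x : 𝒲) (s : Finset ℕ) : Prop :=
  ∃ a : ℕ → ℝ, x = ∑ i ∈ s, a i • b i

/-- `(y n)` is a block sequence with respect to the basic sequence `(b n)`: a sequence of
nonzero finite linear combinations of the `b i` with successive supports. -/
def IsBlockSeq (b : ℕ → 𝒲) (y : ℕ → 𝒲) : Prop :=
  (∀ n, y n ≠ 0) ∧
  ∃ D : ℕ → Finset ℕ, (∀ n, SuppIn b (y n) (D n)) ∧
    ∀ n, ∀ i ∈ D n, ∀ j ∈ D (n + 1), i < j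

/-- The closed linear span of a set. -/
noncomputable def closedSpan (S : Set 𝒲) : Submodule ℝ 𝒲 :=
  (Submodule.span ℝ S).topologicalClosure

/-- `(x i)_{i<k} ∼_K (y i)_{i<k}`:
`(1/K)‖∑ a i • x i‖ ≤ ‖∑ a i • y i‖ ≤ K‖∑ a i • x i‖` for all scalars. -/
def SeqEquiv (K : ℝ) (k : ℕ) (x y : ℕ → 𝒲) : Prop :=
  ∀ a : ℕ → ℝ,
    (1 / K) * ‖∑ i ∈ Finset.range k, a i • x i‖ ≤ ‖∑ i ∈ Finset.range k, a i • y i‖ ∧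
    ‖∑ i ∈ Finset.range k, a i • y i‖ ≤ K * ‖∑ i ∈ Finset.range k, a i • x i‖

/-- The tree `T((x n), Y, K)` of finite sequences `(y 0, …, y k)` of vectors of `Y` that are
`K`-equivalent to `(x 0, …, x k)`, ordered by end-extension. -/
def embTree (x : ℕ → 𝒲) (Y : Set 𝒲) (K : ℝ) : Set (List 𝒲) :=
  {l | (∀ v ∈ l, v ∈ Y) ∧ SeqEquiv K l.length (fun i => l.getD i 0) x}

open Classical in
/-- The rank of a tree of finite sequences: if the proper end-extension relation is
well-founded (equivalently, for trees, there is no infinite branch), this is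
`sup { ρ(s) + 1 : s ∈ T }` where `ρ` is the usual rank function; otherwise it is `∞ = ⊤`. -/
noncomputable def treeRank (T : Set (List 𝒲)) : WithTop Ordinal :=
  if h : WellFounded (fun t s : T => s.val <+: t.val ∧ s.val ≠ t.val) then
    ((⨆ s : T, Order.succ ((h.apply s).rank) : Ordinal) : WithTop Ordinal)
  else ⊤

open Classical in
/-- The embeddability index `Emb((x n), Y) = sup_{K ≥ 1} rank T((x n), Y, K)`. -/
noncomputable def embIndex (x : ℕ → 𝒲) (Y : Set 𝒲) : WithTop Ordinal :=
  if ∃ K : ℝ, 1 ≤ K ∧ treeRank (embTree x Y K) = ⊤ then ⊤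
  else ((sSup {o : Ordinal | ∃ K : ℝ, 1 ≤ K ∧
      (o : WithTop Ordinal) = treeRank (embTree x Y K)} : Ordinal) : WithTop Ordinal)

/-- `(I m)` is a sequence of successive nonempty finite intervals `I 0 < I 1 < …` of `ℕ`. -/
def IntervalSeq (I : ℕ → Finset ℕ) : Prop :=
  (∀ m, ∃ a b : ℕ, a ≤ b ∧ I m = Finset.Icc a b) ∧
  ∀ m, ∀ i ∈ I m, ∀ j ∈ I (m + 1), i < j

/-- The closed subspace `[b n : n ∉ ⋃_{m ∈ A} I m]`. -/
noncomputable def residualSpace (b : ℕ → 𝒲) (I : ℕ → Finset ℕ) (A : Set ℕ) :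
    Submodule ℝ 𝒲 :=
  closedSpan {v | ∃ n : ℕ, (∀ m ∈ A, n ∉ I m) ∧ v = b n}

/-- The space `[b n]` with its basis `(b n)` is `α`-tight. -/
def IsAlphaTight (b : ℕ → 𝒲) (α : Ordinal) : Prop :=
  ∀ y : ℕ → 𝒲, IsBlockSeq b y →
    ∃ I : ℕ → Finset ℕ, IntervalSeq I ∧
      ∀ A : Set ℕ, A.Infinite →
        embIndex y (residualSpace b I A : Set 𝒲) ≤ (α : WithTop Ordinal)

/-- The space `[b n]` with its basis `(b n)` is `α`-minimal: every block subspace `[z n]`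
`α`-embeds into every infinite-dimensional subspace `Y ⊆ [b n]`. -/
def IsAlphaMinimal (b : ℕ → 𝒲) (α : Ordinal) : Prop :=
  ∀ z : ℕ → 𝒲, IsBlockSeq b z →
    ∀ Y : Submodule ℝ 𝒲, (Y : Set 𝒲) ⊆ (closedSpan (Set.range b) : Set 𝒲) →
      ¬FiniteDimensional ℝ Y →
        (α : WithTop Ordinal) ≤ embIndex z (Y : Set 𝒲)

/-- `X` embeds isomorphically into `Y` (as an isomorphism onto its image). -/
def LinIsoEmbeds (X Y : Submodule ℝ 𝒲) : Prop :=
  ∃ T : X →ₗ[ℝ] 𝒲, (∀ v : X, T v ∈ Y) ∧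
    ∃ c C : ℝ, 0 < c ∧ ∀ v : X, c * ‖v‖ ≤ ‖T v‖ ∧ ‖T v‖ ≤ C * ‖v‖

/-- `X` is a minimal space: it embeds isomorphically into every infinite-dimensional
closed subspace of itself. -/
def IsMinimalSpace (X : Submodule ℝ 𝒲) : Prop :=
  ∀ Y : Submodule ℝ 𝒲, Y ≤ X → IsClosed (Y : Set 𝒲) → ¬FiniteDimensional ℝ Y →
    LinIsoEmbeds X Y

/-- `F` embeds into `Y` with constant `K`. -/
def KEmbeds (K : ℝ) (F Y : Submodule ℝ 𝒲) : Prop :=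
  ∃ T : F →ₗ[ℝ] 𝒲, (∀ v : F, T v ∈ Y) ∧
    ∀ v : F, (1 / K) * ‖v‖ ≤ ‖T v‖ ∧ ‖T v‖ ≤ K * ‖v‖

end Rosendal

namespace Rosendal

/-- rational finitely supported vectors -/
abbrev Vq := ℕ →₀ ℚ
abbrev SV := Submodule ℚ Vq
abbrev SG := Submodule ℚ (Vq × Vq)

def Tl (n : ℕ) : SV where
  carrier := {v | ∀ i < n, v i = 0}
  add_mem' := by
    intro a b ha hb i hi
    simp [ha i hi, hb i hi]
  zero_mem' := by intro i _; rfl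
  smul_mem' := by
    intro c a ha i hi
    simp [ha i hi]

def Hd (n : ℕ) : SV where
  carrier := {v | ∀ i, n ≤ i → v i = 0}
  add_mem' := by
    intro a b ha hb i hi
    simp [ha i hi, hb i hi]
  zero_mem' := by intro i _; rfl
  smul_mem' := by
    intro c a ha i hi
    simp [ha i hi]

lemma mem_Tl {n : ℕ} {v : Vq} : v ∈ Tl n ↔ ∀ i < n, v i = 0 := Iff.rfl
lemma mem_Hd {n : ℕ} {v : Vq} : v ∈ Hd n ↔ ∀ i, n ≤ i → v i = 0 := Iff.rfl

lemma Tl_anti {m n : ℕ} (h : m ≤ n) : Tl n ≤ Tl m := fun _ hv i hi => hv i (lt_of_lt_of_le hi h)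
lemma Hd_mono {m n : ℕ} (h : m ≤ n) : Hd m ≤ Hd n := fun _ hv i hi => hv i (h.trans hi)

lemma Hd_Tl_zero {n : ℕ} {v : Vq} (h1 : v ∈ Hd n) (h2 : v ∈ Tl n) : v = 0 := by
  ext i
  rcases lt_or_ge i n with h | h
  · exact h2 i h
  · exact h1 i h

lemma exists_Hd (v : Vq) : ∃ n, v ∈ Hd n := by
  refine ⟨v.support.sup id + 1, fun i hi => ?_⟩
  by_contra h
  have : i ≤ v.support.sup id := Finset.le_sup (f := id) (Finsupp.mem_support_iff.2 h)
  omega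

def Big (X : SV) : Prop := ∀ n, ∃ v ∈ X, v ≠ 0 ∧ v ∈ Tl n

lemma Big.mono {X Y : SV} (h : Big X) (hXY : X ≤ Y) : Big Y := fun n =>
  let ⟨v, h1, h2⟩ := h n; ⟨v, hXY h1, h2⟩

lemma Big.tail {X : SV} (h : Big X) (m : ℕ) : Big (X ⊓ Tl m) := fun n =>
  let ⟨v, h1, h2, h3⟩ := h (max m n)
  ⟨v, ⟨h1, Tl_anti (le_max_left _ _) h3⟩, h2, Tl_anti (le_max_right _ _) h3⟩

lemma exists_block (R : ℕ → ℕ → Vq → Prop) (h : ∀ k n, ∃ v, v ≠ 0 ∧ v ∈ Tl n ∧ R k n v) :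
    ∃ (p : ℕ → ℕ) (x : ℕ → Vq), StrictMono p ∧ ∀ k, x k ≠ 0 ∧ x k ∈ Tl (p k) ∧
      x k ∈ Hd (p (k + 1)) ∧ R k (p k) (x k) := by
  choose g hg0 hgT hgR using h
  choose b hb using exists_Hd
  let p : ℕ → ℕ := fun k => Nat.rec 0 (fun k n => max (n + 1) (b (g k n))) k
  have hp : ∀ k, p (k + 1) = max (p k + 1) (b (g k (p k))) := fun k => rfl
  refine ⟨p, fun k => g k (p k), strictMono_nat_of_lt_succ fun k => ?_, fun k => ⟨hg0 _ _, hgT _ _, ?_, hgR _ _⟩⟩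
  · rw [hp]; omega
  · rw [hp]; exact Hd_mono (le_max_right _ _) (hb _)

def IsBlk (p : ℕ → ℕ) (x : ℕ → Vq) : Prop :=
  StrictMono p ∧ ∀ k, x k ≠ 0 ∧ x k ∈ Tl (p k) ∧ x k ∈ Hd (p (k + 1))

lemma IsBlk.tail_mem {p x} (h : IsBlk p x) {k : ℕ} {v : Vq}
    (hv : v ∈ Submodule.span ℚ (Set.range x)) (hv2 : v ∈ Tl (p k)) :
    v ∈ Submodule.span ℚ (x '' Set.Ici k) := by
  have : Set.range x = x '' Set.Iio k ∪ x '' Set.Ici k := by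
    rw [← Set.image_union, Set.Iio_union_Ici, Set.image_univ]
  rw [this, Submodule.span_union] at hv
  obtain ⟨a, ha, b, hb, rfl⟩ := Submodule.mem_sup.1 hv
  have hb' : b ∈ Tl (p k) := by
    refine (Submodule.span_le.2 ?_) hb
    rintro _ ⟨j, hj, rfl⟩
    exact Tl_anti (h.1.monotone hj) (h.2 j).2.1
  have ha' : a ∈ Hd (p k) := by
    refine (Submodule.span_le.2 ?_) ha
    rintro _ ⟨j, hj, rfl⟩
    exact Hd_mono (h.1.monotone hj) (h.2 j).2.2
  have ha2 : a ∈ Tl (p k) := by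
    have := (Tl (p k)).sub_mem hv2 hb'
    simpa using this
  rw [Hd_Tl_zero ha' ha2]
  simpa using hb

lemma IsBlk.big {p x} (h : IsBlk p x) : Big (Submodule.span ℚ (Set.range x)) := fun n =>
  ⟨x n, Submodule.subset_span ⟨n, rfl⟩, (h.2 n).1, Tl_anti (h.1.id_le n) (h.2 n).2.1⟩

lemma exists_IsBlk {X : SV} (h : Big X) : ∃ p x, IsBlk p x ∧ Submodule.span ℚ (Set.range x) ≤ X := by
  obtain ⟨p, x, hp, hx⟩ := exists_block (fun _ _ v => v ∈ X) (fun k n => by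
    obtain ⟨v, h1, h2, h3⟩ := h n
    exact ⟨v, h2, h3, h1⟩)
  refine ⟨p, x, ⟨hp, fun k => ⟨(hx k).1, (hx k).2.1, (hx k).2.2.1⟩⟩, Submodule.span_le.2 ?_⟩
  rintro _ ⟨j, rfl⟩
  exact (hx j).2.2.2

lemma diag (X : ℕ → SV) (hX : ∀ n, Big (X n)) (hanti : Antitone X) :
    ∃ Z, Big Z ∧ Z ≤ X 0 ∧ ∀ n, ∃ m, Z ⊓ Tl m ≤ X n := by
  obtain ⟨p, x, hp, hx⟩ := exists_block (fun k _ v => v ∈ X k) (fun k n => by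
    obtain ⟨v, h1, h2, h3⟩ := hX k n
    exact ⟨v, h2, h3, h1⟩)
  have hB : IsBlk p x := ⟨hp, fun k => ⟨(hx k).1, (hx k).2.1, (hx k).2.2.1⟩⟩
  refine ⟨Submodule.span ℚ (Set.range x), hB.big, Submodule.span_le.2 ?_, fun n => ⟨p n, ?_⟩⟩
  · rintro _ ⟨j, rfl⟩
    exact hanti (Nat.zero_le j) (hx j).2.2.2
  · rintro v ⟨h1, h2⟩
    refine (Submodule.span_le.2 ?_) (hB.tail_mem h1 h2)
    rintro _ ⟨j, hj, rfl⟩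
    exact hanti hj (hx j).2.2.2

lemma stab {ι : Type*} [Countable ι] (Q : ι → SV → Prop)
    (hQ : ∀ i X Z m, X ⊓ Tl m ≤ Z → Big X → Q i Z → Q i X) (X : SV) (hX : Big X) :
    ∃ Z ≤ X, Big Z ∧ ∀ i, Q i Z ∨ ∀ Z' ≤ Z, Big Z' → ¬ Q i Z' := by
  classical
  have := Encodable.ofCountable ι
  have step : ∀ n (X : {X : SV // Big X}), ∃ Z : {X : SV // Big X}, Z.1 ≤ X.1 ∧
      ∀ i, Encodable.encode i = n → Q i Z.1 ∨ ∀ Z' ≤ Z.1, Big Z' → ¬ Q i Z' := by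
    rintro n ⟨X, hX⟩
    by_cases h : ∃ Z ≤ X, Big Z ∧ ∃ i : ι, Encodable.encode i = n ∧ Q i Z
    · obtain ⟨Z, h1, h2, i, h3, h4⟩ := h
      refine ⟨⟨Z, h2⟩, h1, fun j hj => Or.inl ?_⟩
      have : j = i := Encodable.encode_injective (hj.trans h3.symm)
      rw [this]; exact h4
    · push Not at h
      exact ⟨⟨X, hX⟩, le_rfl, fun i hi => Or.inr fun Z' h1 h2 => h Z' h1 h2 i hi⟩
  choose g hg1 hg2 using step
  let S : ℕ → {X : SV // Big X} := fun k => Nat.rec ⟨X, hX⟩ (fun k Z => g k Z) k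
  have hS : ∀ k, S (k + 1) = g k (S k) := fun k => rfl
  obtain ⟨Z, hZ1, hZ2, hZ3⟩ := diag (fun n => (S n).1) (fun n => (S n).2)
    (antitone_nat_of_succ_le fun n => by rw [hS]; exact hg1 _ _)
  refine ⟨Z, hZ2, hZ1, fun i => ?_⟩
  obtain ⟨m, hm⟩ := hZ3 (Encodable.encode i + 1)
  rcases hg2 _ (S (Encodable.encode i)) i rfl with h | h
  · exact Or.inl (hQ i _ _ m hm hZ1 h)
  · refine Or.inr fun Z' h1 h2 h3 => h (Z' ⊓ Tl m) ?_ (h2.tail m) ?_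
    · exact (inf_le_inf_right _ h1).trans hm
    · exact hQ i _ _ 0 (inf_le_left.trans inf_le_left) (h2.tail m) h3

def Good (N : Vq → ℝ) (K : ℝ) (G : SG) : Prop :=
  ∀ q ∈ G, N q.1 ≤ K * N q.2 ∧ N q.2 ≤ K * N q.1

noncomputable abbrev fstM : (Vq × Vq) →ₗ[ℚ] Vq := LinearMap.fst ℚ Vq Vq
noncomputable abbrev sndM : (Vq × Vq) →ₗ[ℚ] Vq := LinearMap.snd ℚ Vq Vq

def PiG (N : Vq → ℝ) (K : ℝ) (Y X : SV) (ξ : Ordinal.{0}) (E : SV) (G : SG) : Prop :=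
  Good N K G ∧ ∀ η, η < ξ → ∀ (n : ℕ) (S : SV), S.FG → S ≤ Y →
    ∃ (F : SV) (G' : SG), F.FG ∧ F ≤ X ⊓ Tl n ∧ G'.FG ∧ G ≤ G' ∧ S ≤ G'.map fstM ∧
    G'.map sndM ≤ E ⊔ F ∧ PiG N K Y X η (E ⊔ F) G'
termination_by ξ

lemma PiG.good {N K Y X ξ E G} (h : PiG N K Y X ξ E G) : Good N K G := by
  rw [PiG] at h; exact h.1

lemma PiG.mono {N K} {Y X Y' X' : SV} {m : ℕ} (hY : Y' ≤ Y) (hX : X ⊓ Tl m ≤ X') :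
    ∀ {ξ} {E E' : SV} {G}, E ≤ E' → PiG N K Y X ξ E G → PiG N K Y' X' ξ E' G := by
  intro ξ
  induction ξ using WellFoundedLT.induction with
  | ind ξ ih =>
    intro E E' G hE h
    rw [PiG] at h ⊢
    refine ⟨h.1, fun η hη n S hS hSY => ?_⟩
    obtain ⟨F, G', h1, h2, h3, h4, h5, h6, h7⟩ := h.2 η hη (max m n) S hS (hSY.trans hY)
    refine ⟨F, G', h1, ?_, h3, h4, h5, h6.trans (sup_le_sup_right hE _), ih η hη (sup_le_sup_right hE _) h7⟩
    refine le_inf (le_trans ?_ hX) (h2.trans (inf_le_right.trans (Tl_anti (le_max_right _ _))))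
    exact h2.trans (inf_le_inf_left _ (Tl_anti (le_max_left _ _)))

lemma Good.monoK {N K K' G} (hN : ∀ v, 0 ≤ N v) (hK : K ≤ K') (h : Good N K G) : Good N K' G :=
  fun q hq => ⟨(h q hq).1.trans (mul_le_mul_of_nonneg_right hK (hN _)),
    (h q hq).2.trans (mul_le_mul_of_nonneg_right hK (hN _))⟩

lemma PiG.monoK {N K K'} {Y X : SV} (hN : ∀ v, 0 ≤ N v) (hK : K ≤ K') :
    ∀ {ξ} {E : SV} {G}, PiG N K Y X ξ E G → PiG N K' Y X ξ E G := by
  intro ξ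
  induction ξ using WellFoundedLT.induction with
  | ind ξ ih =>
    intro E G h
    rw [PiG] at h ⊢
    refine ⟨h.1.monoK hN hK, fun η hη n S hS hSY => ?_⟩
    obtain ⟨F, G', h1, h2, h3, h4, h5, h6, h7⟩ := h.2 η hη n S hS hSY
    exact ⟨F, G', h1, h2, h3, h4, h5, h6, ih η hη h7⟩

/-- embedding game, no tails -/
def OmG (N : Vq → ℝ) (K : ℝ) (Y W : SV) (ξ : Ordinal.{0}) (G : SG) : Prop :=
  Good N K G ∧ ∀ η, η < ξ → ∀ (S : SV), S.FG → S ≤ Y →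
    ∃ (G' : SG), G ≤ G' ∧ S ≤ G'.map fstM ∧ G'.map sndM ≤ W ∧ OmG N K Y W η G'
termination_by ξ

def Th (N : Vq → ℝ) (K : ℝ) (Z : SV) (ξ : Ordinal.{0}) (E : SV) (G : SG) : Prop :=
  ∃ Y ≤ Z, Big Y ∧ PiG N K Y Z ξ E G

lemma Th.mono {N K ξ E G} {Z Z' : SV} {m : ℕ} (h : Z ⊓ Tl m ≤ Z') (hT : Th N K Z ξ E G) :
    Th N K Z' ξ E G := by
  obtain ⟨Y, h1, h2, h3⟩ := hT
  exact ⟨Y ⊓ Tl m, (inf_le_inf_right _ h1).trans h, h2.tail m, h3.mono inf_le_left h le_rfl⟩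

instance countFG {M : Type*} [AddCommGroup M] [Module ℚ M] [Countable M] :
    Countable {S : Submodule ℚ M // S.FG} := by
  have : Function.Surjective (fun s : Finset M => (⟨Submodule.span ℚ (s : Set M), ⟨s, rfl⟩⟩ : {S : Submodule ℚ M // S.FG})) := by
    rintro ⟨S, s, rfl⟩
    exact ⟨s, rfl⟩
  exact this.countable

def comp (G G' : SG) : SG where
  carrier := {p | ∃ b, (p.1, b) ∈ G ∧ (b, p.2) ∈ G'}
  add_mem' := by
    rintro a c ⟨b, h1, h2⟩ ⟨b', h3, h4⟩
    exact ⟨b + b', G.add_mem h1 h3, G'.add_mem h2 h4⟩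
  zero_mem' := ⟨0, G.zero_mem, G'.zero_mem⟩
  smul_mem' := by
    rintro c a ⟨b, h1, h2⟩
    exact ⟨c • b, G.smul_mem c h1, G'.smul_mem c h2⟩

theorem core (N : Vq → ℝ) (hN : ∀ v, 0 ≤ N v) (α : Ordinal.{0}) (hα : Countable (Set.Iic α))
    (H : ∀ X, Big X → ∃ K : ℕ, Th N K X α ⊥ ⊥) :
    ∃ (Y : SV) (K : ℝ), 1 ≤ K ∧ Big Y ∧ ∀ W ≤ Y, Big W → OmG N K Y W α ⊥ := by
  have htop : Big (⊤ : SV) := fun n => ⟨Finsupp.single n 1, trivial, by simp, fun i hi => by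
    simp [hi.ne']⟩
  -- uniform K
  obtain ⟨X0, -, hX0, h0⟩ := stab (fun (K : ℕ) Z => ¬ Th N K Z α ⊥ ⊥)
    (fun i X Z m h _ h1 h2 => h1 (h2.mono h)) ⊤ htop
  obtain ⟨K, hK⟩ : ∃ K : ℕ, ∀ Z ≤ X0, Big Z → Th N K Z α ⊥ ⊥ := by
    obtain ⟨K, hK⟩ := H X0 hX0
    refine ⟨K, fun Z hZ hZ' => ?_⟩
    rcases h0 K with h | h
    · exact absurd hK h
    · exact not_not.1 (h Z hZ hZ')
  -- first stabilisation
  obtain ⟨X1, hX10, hX1, h1⟩ := stab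
    (fun (i : Set.Iic α × {S : SV // S.FG} × {S : SG // S.FG}) Z =>
      ¬ Th N K Z i.1 i.2.1 i.2.2)
    (fun i X Z m h _ h1 h2 => h1 (h2.mono h)) X0 hX0
  have h1' : ∀ ξ ≤ α, ∀ (E : SV) (G : SG), E.FG → G.FG → Th N K X1 ξ E G →
      ∀ Z ≤ X1, Big Z → Th N K Z ξ E G := by
    intro ξ hξ E G hE hG hT Z hZ hZ'
    rcases h1 (⟨ξ, hξ⟩, ⟨E, hE⟩, ⟨G, hG⟩) with h | h
    · exact absurd hT h
    · exact not_not.1 (h Z hZ hZ')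
  -- second stabilisation
  let A : SV → ℕ → Ordinal.{0} → SV → SG → SV → Prop := fun Z n η E G S =>
    ∃ (F : SV) (G' : SG), F.FG ∧ F ≤ Z ⊓ Tl n ∧ G'.FG ∧ G ≤ G' ∧ S ≤ G'.map fstM ∧
      G'.map sndM ≤ E ⊔ F ∧ Th N K X1 η (E ⊔ F) G'
  obtain ⟨X2, hX21, hX2, h2⟩ := stab
    (fun (i : Set.Iic α × {S : SV // S.FG} × {S : SG // S.FG} × {S : SV // S.FG}) Z =>
      ∃ n, ¬ A Z n i.1 i.2.1 i.2.2.1 i.2.2.2)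
    (by
      rintro i X Z m h _ ⟨n, hn⟩
      refine ⟨max m n, fun ⟨F, G', h1, h2, h3⟩ => hn ⟨F, G', h1, ?_, h3⟩⟩
      refine le_inf (le_trans ?_ h) (h2.trans (inf_le_right.trans (Tl_anti (le_max_right _ _))))
      exact h2.trans (inf_le_inf_left _ (Tl_anti (le_max_left _ _)))) X1 hX1
  have h2' : ∀ η ≤ α, ∀ (E : SV) (G : SG) (S : SV), E.FG → G.FG → S.FG →
      ∀ Z0 ≤ X2, Big Z0 → (∀ n, A Z0 n η E G S) →
      ∀ Z ≤ X2, Big Z → ∀ n, A Z n η E G S := by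
    intro η hη E G S hE hG hS Z0 hZ0 hZ0' hA Z hZ hZ'
    rcases h2 (⟨η, hη⟩, ⟨E, hE⟩, ⟨G, hG⟩, ⟨S, hS⟩) with ⟨n, hn⟩ | h
    · exfalso
      apply hn
      obtain ⟨F, G', h1, h2, h3⟩ := hA n
      exact ⟨F, G', h1, h2.trans (inf_le_inf_right _ hZ0), h3⟩
    · exact not_exists_not.1 (h Z hZ hZ')
  -- third stabilisation
  obtain ⟨X3, hX32, hX3, h3⟩ := stab
    (fun (i : Set.Iic α × {S : SV // S.FG} × {S : SG // S.FG}) Y =>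
      ∃ m, ∀ S : SV, S.FG → S ≤ Y ⊓ Tl m → ∀ Z ≤ X2, Big Z → ∀ n, A Z n i.1 i.2.1 i.2.2 S)
    (by
      rintro i X Z m h _ ⟨n, hn⟩
      refine ⟨max m n, fun S hS hSX => hn S hS ?_⟩
      refine le_inf (le_trans ?_ h) (hSX.trans (inf_le_right.trans (Tl_anti (le_max_right _ _))))
      exact hSX.trans (inf_le_inf_left _ (Tl_anti (le_max_left _ _)))) X2 hX2
  have h3' : ∀ ξ ≤ α, ∀ η < ξ, ∀ (E : SV) (G : SG), E.FG → G.FG → Th N K X1 ξ E G →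
      ∃ m, ∀ S : SV, S.FG → S ≤ X3 ⊓ Tl m → ∀ Z ≤ X2, Big Z → ∀ n, A Z n η E G S := by
    intro ξ hξ η hη E G hE hG hT
    have hηα : η ≤ α := hη.le.trans hξ
    rcases h3 (⟨η, hηα⟩, ⟨E, hE⟩, ⟨G, hG⟩) with h | h
    · exact h
    · exfalso
      obtain ⟨Y, hY1, hY2, hY3⟩ := h1' ξ hξ E G hE hG hT X3 (hX32.trans hX21) hX3
      refine h Y hY1 hY2 ⟨0, fun S hS hSY => ?_⟩
      refine h2' η hηα E G S hE hG hS X3 hX32 hX3 fun n => ?_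
      rw [PiG] at hY3
      obtain ⟨F, G', g1, g2, g3, g4, g5, g6, g7⟩ := hY3.2 η hη n S hS (hSY.trans inf_le_left)
      refine ⟨F, G', g1, g2, g3, g4, g5, g6, ?_⟩
      exact Th.mono (m := 0) (inf_le_left.trans (hX32.trans hX21)) ⟨Y, hY1, hY2, g7⟩
  obtain ⟨Y, hY1, hY2, hY3⟩ := hK X3 ((hX32.trans hX21).trans hX10) hX3
  refine ⟨Y, (K * K + 1 : ℝ), by nlinarith [sq_nonneg (K : ℝ)], hY2, fun W hW hWB => ?_⟩
  have key : ∀ ξ ≤ α, ∀ (E E' : SV) (G G' : SG), E.FG → E'.FG → G.FG → G'.FG →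
      PiG N K Y X3 ξ E G → Th N K X1 ξ E' G' → E ≤ G'.map fstM → E' ≤ W →
      G.map sndM ≤ E → G'.map sndM ≤ E' →
      OmG N (K * K + 1) Y W ξ (comp G G') := by
    intro ξ
    induction ξ using WellFoundedLT.induction with
    | ind ξ ih =>
      intro hξ E E' G G' hE hE' hG hG' hP hT hEG hEW hGE hGE'
      rw [OmG]
      refine ⟨?_, fun η hη S hS hSY => ?_⟩
      · have g1 := hP.good
        have g2 : Good N K G' := by obtain ⟨_, _, _, h⟩ := hT; exact h.good
        rintro ⟨a, c⟩ ⟨b, hab, hbc⟩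
        have e1 := g1 _ hab
        have e2 := g2 _ hbc
        simp only at e1 e2 ⊢
        have hK0 : (0 : ℝ) ≤ K := Nat.cast_nonneg K
        constructor
        · nlinarith [mul_le_mul_of_nonneg_left e2.1 hK0, hN c]
        · nlinarith [mul_le_mul_of_nonneg_left e1.2 hK0, hN a]
      · obtain ⟨m, hm⟩ := h3' ξ hξ η hη E' G' hE' hG' hT
        rw [PiG] at hP
        obtain ⟨F, G1, g1, g2, g3, g4, g5, g6, g7⟩ := hP.2 η hη m S hS hSY
        obtain ⟨F', G1', k1, k2, k3, k4, k5, k6, k7⟩ :=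
          hm F g1 g2 W (hW.trans (hY1.trans hX32)) hWB 0
        have hEF : E ⊔ F ≤ G1'.map fstM :=
          sup_le (hEG.trans (Submodule.map_mono k4)) k5
        have hE'W : E' ⊔ F' ≤ W := sup_le hEW (k2.trans inf_le_left)
        refine ⟨comp G1 G1', ?_, ?_, ?_, ih η hη (hη.le.trans hξ) (E ⊔ F) (E' ⊔ F') G1 G1'
          (hE.sup g1) (hE'.sup k1) g3 k3 g7 k7 hEF hE'W g6 k6⟩
        · rintro ⟨a, c⟩ ⟨b, h1, h2⟩
          exact ⟨b, g4 h1, k4 h2⟩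
        · intro s hs
          obtain ⟨⟨s', b⟩, hsb, rfl⟩ := g5 hs
          have hb : b ∈ E ⊔ F := g6 ⟨_, hsb, rfl⟩
          obtain ⟨⟨b', c⟩, hbc, rfl⟩ := hEF hb
          exact ⟨(s', c), ⟨b', hsb, hbc⟩, rfl⟩
        · rintro _ ⟨⟨a, c⟩, ⟨b, _, h2⟩, rfl⟩
          exact hE'W (k6 ⟨_, h2, rfl⟩)
  have := key α le_rfl ⊥ ⊥ ⊥ ⊥ Submodule.fg_bot Submodule.fg_bot Submodule.fg_bot Submodule.fg_bot hY3
    (hK X1 hX10 hX1) bot_le bot_le (by simp) (by simp)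
  have hc : comp ⊥ ⊥ = (⊥ : SG) := by
    rw [eq_bot_iff]
    rintro ⟨a, c⟩ ⟨b, h1, h2⟩
    simp only [Submodule.mem_bot, Prod.mk_eq_zero] at h1 h2 ⊢
    exact ⟨h1.1, h2.2⟩
  rwa [hc] at this

end Rosendal

namespace Rosendal

structure BProj {𝒲 : Type} [NormedAddCommGroup 𝒲] [NormedSpace ℝ 𝒲] (e : ℕ → 𝒲) where
  C : ℝ
  hC : 1 ≤ C
  P : ℕ → 𝒲 →L[ℝ] 𝒲
  hP : ∀ n v, ‖P n v‖ ≤ C * ‖v‖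
  hPe : ∀ n i, P n (e i) = if i < n then e i else 0
  hfin : ∀ n v, P n v ∈ Submodule.span ℝ (e '' Set.Iio n)
  ne : ∀ i, e i ≠ 0

section
variable {𝒲 : Type} [NormedAddCommGroup 𝒲] [NormedSpace ℝ 𝒲]

def ZSub (e : ℕ → 𝒲) : Submodule ℝ C(OnePoint ℕ, 𝒲) where
  carrier := {f | f ((0 : ℕ) : OnePoint ℕ) = 0 ∧
    ∀ n : ℕ, f ((n + 1 : ℕ) : OnePoint ℕ) - f ((n : ℕ) : OnePoint ℕ) ∈ Submodule.span ℝ {e n}}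
  add_mem' := by
    rintro f g ⟨hf, hf'⟩ ⟨hg, hg'⟩
    refine ⟨by simp [hf, hg], fun n => ?_⟩
    have := Submodule.add_mem _ (hf' n) (hg' n)
    convert this using 1
    simp only [ContinuousMap.add_apply]; abel
  zero_mem' := by simp
  smul_mem' := by
    rintro c f ⟨hf, hf'⟩
    refine ⟨by simp [hf], fun n => ?_⟩
    have := Submodule.smul_mem _ c (hf' n)
    convert this using 1
    simp [smul_sub]

lemma ZSub_closed (e : ℕ → 𝒲) : IsClosed (ZSub e : Set C(OnePoint ℕ, 𝒲)) := by
  have : (ZSub e : Set C(OnePoint ℕ, 𝒲)) = {f | f ((0 : ℕ) : OnePoint ℕ) = 0} ∩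
    ⋂ n : ℕ, {f | f ((n + 1 : ℕ) : OnePoint ℕ) - f ((n : ℕ) : OnePoint ℕ) ∈ (Submodule.span ℝ {e n} : Set 𝒲)} := by
    ext f; simp [ZSub]
  rw [this]
  refine IsClosed.inter ?_ (isClosed_iInter fun n => ?_)
  · exact isClosed_eq (continuous_eval_const _) continuous_const
  · have hc : IsClosed (Submodule.span ℝ {e n} : Set 𝒲) := Submodule.closed_of_finiteDimensional _
    exact hc.preimage ((continuous_eval_const _).sub (continuous_eval_const _))

lemma ZSub_sum {e : ℕ → 𝒲} {f : C(OnePoint ℕ, 𝒲)} (hf : f ∈ ZSub e) :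
    ∃ a : ℕ → ℝ, ∀ n : ℕ, f (n : OnePoint ℕ) = ∑ i ∈ Finset.range n, a i • e i := by
  have h := fun n => Submodule.mem_span_singleton.1 (hf.2 n)
  choose a ha using h
  refine ⟨a, fun n => ?_⟩
  induction n with
  | zero => simpa using hf.1
  | succ n ih =>
    rw [Finset.sum_range_succ, ← ih, ha]; abel

lemma ZSub_tendsto (f : C(OnePoint ℕ, 𝒲)) :
    Tendsto (fun n : ℕ => f (n : OnePoint ℕ)) atTop (𝓝 (f OnePoint.infty)) :=
  (OnePoint.continuous_iff_from_nat f).1 f.continuous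

lemma exists_ZSub {e : ℕ → 𝒲} {a : ℕ → ℝ} {x : 𝒲}
    (h : Tendsto (fun N => ∑ i ∈ Finset.range N, a i • e i) atTop (𝓝 x)) :
    ∃ f ∈ ZSub e, f OnePoint.infty = x ∧ ∀ n : ℕ, f (n : OnePoint ℕ) = ∑ i ∈ Finset.range n, a i • e i := by
  refine ⟨OnePoint.continuousMapMkNat _ x h, ⟨?_, fun n => ?_⟩, rfl, fun n => rfl⟩
  · change ∑ i ∈ Finset.range 0, a i • e i = 0
    simp
  · change ∑ i ∈ Finset.range (n + 1), a i • e i - ∑ i ∈ Finset.range n, a i • e i ∈ _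
    rw [Finset.sum_range_succ]
    simp only [add_sub_cancel_left]
    exact Submodule.smul_mem _ _ (Submodule.mem_span_singleton_self _)

theorem exists_BProj [CompleteSpace 𝒲] {e : ℕ → 𝒲} (he : IsSchauderBasis e) : Nonempty (BProj e) := by
  have hZ : CompleteSpace (ZSub e) := (ZSub_closed e).completeSpace_coe
  let ev : ∀ p : OnePoint ℕ, (ZSub e) →L[ℝ] 𝒲 := fun p =>
    (ContinuousMap.evalCLM ℝ p).comp (ZSub e).subtypeL
  have hev : ∀ p f, ev p f = f.1 p := fun p f => rfl
  let T := ev OnePoint.infty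
  have hext : ∀ (f g : ZSub e), f.1 OnePoint.infty = g.1 OnePoint.infty → f = g := by
    intro f g h
    obtain ⟨a, ha⟩ := ZSub_sum f.2
    obtain ⟨b, hb⟩ := ZSub_sum g.2
    have h1 := ZSub_tendsto f.1
    have h2 := ZSub_tendsto g.1
    simp only [ha] at h1
    simp only [hb] at h2
    have hab : a = b := (he (f.1 OnePoint.infty)).unique h1 (by rw [h]; exact h2)
    subst hab
    ext p
    induction p using OnePoint.rec with
    | infty => exact h
    | coe n => rw [ha, hb]
  have hker : T.ker = ⊥ := by
    rw [LinearMap.ker_eq_bot]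
    intro f g h
    exact hext f g h
  have hran : T.range = ⊤ := by
    rw [LinearMap.range_eq_top]
    intro x
    obtain ⟨a, ha, -⟩ := he x
    obtain ⟨f, hf, h1, -⟩ := exists_ZSub ha
    exact ⟨⟨f, hf⟩, h1⟩
  let S := ContinuousLinearEquiv.ofBijective T hker hran
  have hS : ∀ x, (S.symm x).1 OnePoint.infty = x := fun x =>
    ContinuousLinearEquiv.ofBijective_apply_symm_apply T hker hran x
  let U : 𝒲 →L[ℝ] ZSub e := S.symm
  let P : ℕ → 𝒲 →L[ℝ] 𝒲 := fun n => (ev (n : OnePoint ℕ)).comp U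
  have hPdef : ∀ n x, P n x = (S.symm x).1 (n : OnePoint ℕ) := fun n x => rfl
  have hPe : ∀ n i, P n (e i) = if i < n then e i else 0 := by
    intro n i
    have key : ∀ n, ∑ j ∈ Finset.range n, (if j = i then (1 : ℝ) else 0) • e j = if i < n then e i else 0 := by
      intro n
      simp [ite_smul]
    have ht : Tendsto (fun N => ∑ j ∈ Finset.range N, (if j = i then (1 : ℝ) else 0) • e j) atTop (𝓝 (e i)) := by
      refine tendsto_const_nhds.congr' ?_
      filter_upwards [eventually_gt_atTop i] with N hN
      rw [key, if_pos hN]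
    obtain ⟨f, hf, h1, h2⟩ := exists_ZSub ht
    have : S.symm (e i) = ⟨f, hf⟩ := hext _ _ (by rw [hS]; exact h1.symm)
    rw [hPdef, this]
    exact (h2 n).trans (key n)
  refine ⟨⟨max 1 ‖U‖, le_max_left _ _, P, fun n v => ?_, hPe, fun n v => ?_, fun i hi => ?_⟩⟩
  · rw [hPdef]
    calc ‖(S.symm v).1 (n : OnePoint ℕ)‖ ≤ ‖(S.symm v).1‖ := ContinuousMap.norm_coe_le_norm _ _
      _ = ‖U v‖ := rfl
      _ ≤ ‖U‖ * ‖v‖ := U.le_opNorm v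
      _ ≤ _ := mul_le_mul_of_nonneg_right (le_max_right _ _) (norm_nonneg _)
  · rw [hPdef]
    obtain ⟨a, ha⟩ := ZSub_sum (S.symm v).2
    rw [ha]
    refine Submodule.sum_mem _ fun j hj => Submodule.smul_mem _ _ (Submodule.subset_span ⟨j, ?_, rfl⟩)
    simpa using hj
  · have h0 : Tendsto (fun N => ∑ j ∈ Finset.range N, (0 : ℝ) • e j) atTop (𝓝 (0 : 𝒲)) := by simp
    have h1 : Tendsto (fun N => ∑ j ∈ Finset.range N, (if j = i then (1 : ℝ) else 0) • e j) atTop (𝓝 (0 : 𝒲)) := by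
      have : ∀ N, ∑ j ∈ Finset.range N, (if j = i then (1 : ℝ) else 0) • e j = 0 := by
        intro N
        simp [ite_smul, hi]
      simp only [this]; exact tendsto_const_nhds
    have := (he 0).unique h0 h1
    have := congrFun this i
    simp at this

end
end Rosendal

namespace Rosendal
section
variable {𝒲 : Type} [NormedAddCommGroup 𝒲] [NormedSpace ℝ 𝒲]

noncomputable def ro : Vq →+ (ℕ →₀ ℝ) :=
  Finsupp.mapRange.addMonoidHom (Rat.castHom ℝ).toAddMonoidHom

lemma ro_apply (v : Vq) (i : ℕ) : ro v i = (v i : ℝ) := rfl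

lemma ro_smul (q : ℚ) (v : Vq) : ro (q • v) = (q : ℝ) • ro v := by
  ext i; simp [ro_apply]

lemma ro_single (i : ℕ) (q : ℚ) : ro (Finsupp.single i q) = Finsupp.single i (q : ℝ) := by
  ext j; simp only [ro_apply, Finsupp.single_apply]; split_ifs <;> simp

noncomputable def io (e : ℕ → 𝒲) : Vq →+ 𝒲 :=
  (Finsupp.linearCombination ℝ e).toAddMonoidHom.comp ro

lemma io_eq (e : ℕ → 𝒲) (v : Vq) : io e v = Finsupp.linearCombination ℝ e (ro v) := rfl

lemma io_smul (e : ℕ → 𝒲) (q : ℚ) (v : Vq) : io e (q • v) = (q : ℝ) • io e v := by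
  rw [io_eq, ro_smul, map_smul]; rfl

lemma io_single (e : ℕ → 𝒲) (i : ℕ) (q : ℚ) : io e (Finsupp.single i q) = (q : ℝ) • e i := by
  rw [io_eq, ro_single, Finsupp.linearCombination_single]

lemma io_sum (e : ℕ → 𝒲) (v : Vq) : io e v = ∑ i ∈ v.support, (v i : ℝ) • e i := by
  conv_lhs => rw [← Finsupp.sum_single v, Finsupp.sum, map_sum]
  simp [io_single]

lemma io_lc (e : ℕ → 𝒲) (x : ℕ → Vq) (c : Vq) :
    io e (Finsupp.linearCombination ℚ x c) = io (fun i => io e (x i)) c := by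
  rw [Finsupp.linearCombination_apply, Finsupp.sum, map_sum, io_sum]
  simp [io_smul]

lemma P_tl {e : ℕ → 𝒲} (b : BProj e) {v : Vq} {n m : ℕ} (h : v ∈ Tl n) (hm : m ≤ n) :
    b.P m (io e v) = 0 := by
  rw [io_sum, map_sum]
  refine Finset.sum_eq_zero fun i _ => ?_
  rw [map_smul, b.hPe]
  split_ifs with hi
  · rw [h i (lt_of_lt_of_le hi hm)]; simp
  · simp

lemma P_hd {e : ℕ → 𝒲} (b : BProj e) {v : Vq} {n m : ℕ} (h : v ∈ Hd n) (hm : n ≤ m) :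
    b.P m (io e v) = io e v := by
  rw [io_sum, map_sum]
  refine Finset.sum_congr rfl fun i hi => ?_
  rw [map_smul, b.hPe, if_pos]
  by_contra hc
  rw [Finsupp.mem_support_iff] at hi
  exact hi (h i (by omega))

lemma P_coord {e : ℕ → 𝒲} (b : BProj e) (v : Vq) (i : ℕ) :
    b.P (i + 1) (io e v) - b.P i (io e v) = (v i : ℝ) • e i := by
  rw [io_sum, map_sum, map_sum, ← Finset.sum_sub_distrib]
  rw [Finset.sum_eq_single i]
  · simp [b.hPe]
  · intro j _ hj
    rw [map_smul, map_smul, b.hPe, b.hPe]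
    by_cases h : j < i
    · rw [if_pos h, if_pos (by omega), sub_self]
    · rw [if_neg h, if_neg (by omega), sub_self]
  · intro hi
    rw [Finsupp.notMem_support_iff] at hi
    simp [hi]

lemma coord_le {e : ℕ → 𝒲} (b : BProj e) (v : Vq) (i : ℕ) :
    |(v i : ℝ)| * ‖e i‖ ≤ 2 * b.C * ‖io e v‖ := by
  rw [← Real.norm_eq_abs, ← norm_smul, ← P_coord b]
  refine (norm_sub_le _ _).trans ?_
  linarith [b.hP (i + 1) (io e v), b.hP i (io e v)]

lemma io_ne {e : ℕ → 𝒲} (b : BProj e) {v : Vq} (h : v ≠ 0) : io e v ≠ 0 := by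
  intro h0
  apply h
  ext i
  have := P_coord b v i
  rw [h0, map_zero, map_zero, sub_zero] at this
  rcases smul_eq_zero.1 this.symm with h | h
  · exact_mod_cast h
  · exact absurd h (b.ne i)

def RBlk {e : ℕ → 𝒲} (b : BProj e) (q : ℕ → ℕ) (y : ℕ → 𝒲) : Prop :=
  Monotone q ∧ ∀ k, y k ≠ 0 ∧ (∀ m ≤ q k, b.P m (y k) = 0) ∧ ∀ m, q (k + 1) ≤ m → b.P m (y k) = y k

lemma IsBlk.rblk {e : ℕ → 𝒲} (b : BProj e) {p x} (h : IsBlk p x) : RBlk b p (fun k => io e (x k)) :=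
  ⟨h.1.monotone, fun k => ⟨io_ne b (h.2 k).1, fun _ hm => P_tl b (h.2 k).2.1 hm,
    fun _ hm => P_hd b (h.2 k).2.2 hm⟩⟩

lemma RBlk.coef {e : ℕ → 𝒲} {b : BProj e} {q y} (h : RBlk b q y) (k : ℕ) (a : ℕ → ℝ) (i : ℕ) (hi : i < k) :
    |a i| * ‖y i‖ ≤ 2 * b.C * ‖∑ j ∈ Finset.range k, a j • y j‖ := by
  set s := ∑ j ∈ Finset.range k, a j • y j with hs
  have : b.P (q (i + 1)) s - b.P (q i) s = a i • y i := by
    rw [hs, map_sum, map_sum, ← Finset.sum_sub_distrib, Finset.sum_eq_single i]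
    · rw [map_smul, map_smul, (h.2 i).2.1 _ le_rfl, (h.2 i).2.2 _ le_rfl]; simp
    · intro j _ hj
      rw [map_smul, map_smul]
      rcases lt_or_gt_of_ne hj with hj | hj
      · rw [(h.2 j).2.2 _ (h.1 (by omega)), (h.2 j).2.2 _ (h.1 (by omega)), sub_self]
      · rw [(h.2 j).2.1 _ (h.1 (by omega)), (h.2 j).2.1 _ (h.1 (by omega)), sub_self]
    · intro h; simp at h; omega
  rw [← Real.norm_eq_abs, ← norm_smul, ← this]
  refine (norm_sub_le _ _).trans ?_
  linarith [b.hP (q (i + 1)) s, b.hP (q i) s]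

lemma half_sum (k : ℕ) : ∑ i ∈ Finset.range k, ((1 : ℝ) / 2) ^ (i + 1) ≤ 1 := by
  have : ∀ k, ∑ i ∈ Finset.range k, ((1 : ℝ) / 2) ^ (i + 1) = 1 - (1 / 2) ^ k := by
    intro k
    induction k with
    | zero => simp
    | succ k ih => rw [Finset.sum_range_succ, ih]; ring
  rw [this]
  have : (0 : ℝ) ≤ (1 / 2) ^ k := by positivity
  linarith

lemma pert {D t : ℝ} (hD : 0 < D) (ht : 0 ≤ t) {y d : ℕ → 𝒲} {k : ℕ} (a : ℕ → ℝ)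
    (hc : ∀ i < k, |a i| * ‖y i‖ ≤ D * ‖∑ j ∈ Finset.range k, a j • y j‖)
    (h : ∀ i < k, ‖d i‖ ≤ t / D * (1 / 2) ^ (i + 1) * ‖y i‖) :
    ‖∑ i ∈ Finset.range k, a i • d i‖ ≤ t * ‖∑ i ∈ Finset.range k, a i • y i‖ := by
  set s := ‖∑ i ∈ Finset.range k, a i • y i‖ with hs
  have hs0 : 0 ≤ s := norm_nonneg _
  calc ‖∑ i ∈ Finset.range k, a i • d i‖ ≤ ∑ i ∈ Finset.range k, ‖a i • d i‖ := norm_sum_le _ _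
    _ ≤ ∑ i ∈ Finset.range k, (1 / 2 : ℝ) ^ (i + 1) * (t * s) := by
        refine Finset.sum_le_sum fun i hi => ?_
        have hi := Finset.mem_range.1 hi
        rw [norm_smul, Real.norm_eq_abs]
        calc |a i| * ‖d i‖ ≤ |a i| * (t / D * (1 / 2) ^ (i + 1) * ‖y i‖) :=
              mul_le_mul_of_nonneg_left (h i hi) (abs_nonneg _)
          _ = (t / D * (1 / 2) ^ (i + 1)) * (|a i| * ‖y i‖) := by ring
          _ ≤ (t / D * (1 / 2) ^ (i + 1)) * (D * s) :=
              mul_le_mul_of_nonneg_left (hc i hi) (by positivity)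
          _ = _ := by field_simp
    _ = (∑ i ∈ Finset.range k, (1 / 2 : ℝ) ^ (i + 1)) * (t * s) := by rw [Finset.sum_mul]
    _ ≤ 1 * (t * s) := mul_le_mul_of_nonneg_right (half_sum k) (by positivity)
    _ = t * s := one_mul _

lemma dense_rat : DenseRange (fun (r : ℕ → ℚ) (i : ℕ) => (r i : ℝ)) :=
  DenseRange.piMap (fun _ => Rat.denseRange_cast)

lemma rat_approx (X : ℕ → 𝒲) (D : Finset ℕ) (a : ℕ → ℝ) {ε : ℝ} (hε : 0 < ε) :
    ∃ r : ℕ → ℚ, ‖∑ i ∈ D, a i • X i - ∑ i ∈ D, (r i : ℝ) • X i‖ < ε := by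
  have hc : Continuous fun r : ℕ → ℝ => ‖∑ i ∈ D, a i • X i - ∑ i ∈ D, r i • X i‖ := by fun_prop
  have ho : IsOpen {r : ℕ → ℝ | ‖∑ i ∈ D, a i • X i - ∑ i ∈ D, r i • X i‖ < ε} :=
    isOpen_lt hc continuous_const
  obtain ⟨r, hr⟩ := dense_rat.exists_mem_open ho ⟨a, by simpa using hε⟩
  exact ⟨r, hr⟩

lemma rat_to_real {A B : ℝ} {s t : ℕ → 𝒲} {k : ℕ}
    (h : ∀ r : ℕ → ℚ, A * ‖∑ i ∈ Finset.range k, (r i : ℝ) • s i‖ ≤ B * ‖∑ i ∈ Finset.range k, (r i : ℝ) • t i‖)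
    (a : ℕ → ℝ) : A * ‖∑ i ∈ Finset.range k, a i • s i‖ ≤ B * ‖∑ i ∈ Finset.range k, a i • t i‖ := by
  refine dense_rat.induction_on (p := fun a : ℕ → ℝ => A * ‖∑ i ∈ Finset.range k, a i • s i‖ ≤ B * ‖∑ i ∈ Finset.range k, a i • t i‖) a ?_ h
  exact isClosed_le (by fun_prop) (by fun_prop)

lemma approx {e : ℕ → 𝒲} (b : BProj e) {p x} (hx : IsBlk p x) {y : ℕ → 𝒲}
    (hy : IsBlockSeq (fun k => io e (x k)) y) :
    ∃ q, RBlk b q y ∧ ∃ y' : ℕ → Vq, (∀ k, y' k ∈ Submodule.span ℚ (Set.range x)) ∧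
      (∀ k, y' k ∈ Tl k) ∧ ∀ k (a : ℕ → ℝ),
        1 / 2 * ‖∑ i ∈ Finset.range k, a i • y i‖ ≤ ‖∑ i ∈ Finset.range k, a i • io e (y' i)‖ ∧
        ‖∑ i ∈ Finset.range k, a i • io e (y' i)‖ ≤ 2 * ‖∑ i ∈ Finset.range k, a i • y i‖ := by
  obtain ⟨hy0, D, hD, hlt⟩ := hy
  have hne : ∀ k, (D k).Nonempty := by
    intro k
    by_contra h
    rw [Finset.not_nonempty_iff_eq_empty] at h
    obtain ⟨a, ha⟩ := hD k
    rw [h] at ha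
    exact hy0 k (by simpa using ha)
  let mn : ℕ → ℕ := fun k => (D k).min' (hne k)
  have hmn : ∀ k, ∀ j ∈ D k, mn k ≤ j := fun k j hj => Finset.min'_le _ _ hj
  have hmx : ∀ k, ∀ j ∈ D k, j + 1 ≤ mn (k + 1) := fun k j hj =>
    hlt k j hj _ (Finset.min'_mem _ _)
  have hsm : StrictMono mn := strictMono_nat_of_lt_succ fun k => hmx k _ (Finset.min'_mem _ _)
  have hR : RBlk b (fun k => p (mn k)) y := by
    refine ⟨hx.1.monotone.comp hsm.monotone, fun k => ⟨hy0 k, fun m hm => ?_, fun m hm => ?_⟩⟩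
    · obtain ⟨a, ha⟩ := hD k
      rw [ha, map_sum]
      refine Finset.sum_eq_zero fun j hj => ?_
      rw [map_smul, P_tl b (hx.2 j).2.1 (hm.trans (hx.1.monotone (hmn k j hj))), smul_zero]
    · obtain ⟨a, ha⟩ := hD k
      rw [ha, map_sum]
      refine Finset.sum_congr rfl fun j hj => ?_
      rw [map_smul, P_hd b (hx.2 j).2.2 ((hx.1.monotone (hmx k j hj)).trans hm)]
  refine ⟨_, hR, ?_⟩
  have hC := b.hC
  have hpos : ∀ k, 0 < (1 / 2 : ℝ) / (2 * b.C) * (1 / 2) ^ (k + 1) * ‖y k‖ := fun k => by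
    have := norm_pos_iff.2 (hy0 k)
    positivity
  have : ∀ k, ∃ v : Vq, v ∈ Submodule.span ℚ (Set.range x) ∧ v ∈ Tl k ∧
      ‖y k - io e v‖ ≤ (1 / 2 : ℝ) / (2 * b.C) * (1 / 2) ^ (k + 1) * ‖y k‖ := by
    intro k
    obtain ⟨a, ha⟩ := hD k
    obtain ⟨r, hr⟩ := rat_approx (fun k => io e (x k)) (D k) a (hpos k)
    refine ⟨∑ i ∈ D k, r i • x i, ?_, ?_, ?_⟩
    · exact Submodule.sum_mem _ fun i _ => Submodule.smul_mem _ _ (Submodule.subset_span ⟨i, rfl⟩)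
    · refine Submodule.sum_mem _ fun i hi => Submodule.smul_mem _ _ ?_
      refine Tl_anti ?_ (hx.2 i).2.1
      exact (hsm.id_le k).trans ((hmn k i hi).trans (hx.1.id_le i))
    · rw [map_sum]
      simp only [io_smul]
      rw [ha]
      rw [ha] at hr
      exact hr.le
  choose y' h1 h2 h3 using this
  refine ⟨y', h1, h2, fun k a => ?_⟩
  have hp := pert (D := 2 * b.C) (t := 1 / 2) (y := y) (d := fun i => y i - io e (y' i)) (k := k)
    (by positivity) (by norm_num) a (hR.coef k a) (fun i _ => h3 i)
  simp only [smul_sub, Finset.sum_sub_distrib] at hp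
  have e1 := norm_sub_norm_le (∑ i ∈ Finset.range k, a i • y i) (∑ i ∈ Finset.range k, a i • io e (y' i))
  have e2 := norm_sub_norm_le (∑ i ∈ Finset.range k, a i • io e (y' i)) (∑ i ∈ Finset.range k, a i • y i)
  rw [norm_sub_rev] at e2
  have := norm_nonneg (∑ i ∈ Finset.range k, a i • y i)
  constructor <;> linarith

end
end Rosendal

namespace Rosendal

variable {𝒲 : Type} [NormedAddCommGroup 𝒲] [NormedSpace ℝ 𝒲]

def Rk (T : Set (List 𝒲)) (ξ : Ordinal.{0}) (l : List 𝒲) : Prop :=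
  l ∈ T ∧ ∀ η < ξ, ∃ t, l <+: t ∧ l ≠ t ∧ Rk T η t
termination_by ξ

lemma Rk.mem {T : Set (List 𝒲)} {ξ l} (h : Rk T ξ l) : l ∈ T := by
  rw [Rk] at h; exact h.1

lemma Rk.ord {T : Set (List 𝒲)} {ξ ζ l} (h : Rk T ξ l) (hz : ζ ≤ ξ) : Rk T ζ l := by
  rw [Rk] at h ⊢; exact ⟨h.1, fun η hη => h.2 η (hη.trans_le hz)⟩

lemma Rk.acc {T : Set (List 𝒲)} (ξ : Ordinal.{0}) : ∀ l : T, ¬ Rk T ξ l.1 →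
    ∃ h : Acc (fun t s : T => s.val <+: t.val ∧ s.val ≠ t.val) l, h.rank < ξ := by
  induction ξ using WellFoundedLT.induction with
  | _ ξ ih =>
    intro l hl
    rw [Rk] at hl
    push Not at hl
    obtain ⟨η, hη, h⟩ := hl l.2
    have key : ∀ t : T, l.1 <+: t.1 ∧ l.1 ≠ t.1 →
        ∃ h : Acc (fun t s : T => s.val <+: t.val ∧ s.val ≠ t.val) t, h.rank < η :=
      fun t ht => ih η hη t (h t.1 ht.1 ht.2)
    have hA : Acc (fun t s : T => s.val <+: t.val ∧ s.val ≠ t.val) l :=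
      Acc.intro _ fun t ht => (key t ht).1
    refine ⟨hA, lt_of_le_of_lt ?_ hη⟩
    rw [Acc.rank_eq]
    apply Ordinal.iSup_le
    rintro ⟨t, ht⟩
    obtain ⟨h1, h2⟩ := key t ht
    exact Order.succ_le_of_lt h2

lemma Rk.of_rank {T : Set (List 𝒲)} (hT : [] ∈ T) {ξ : Ordinal.{0}}
    (h : ¬ treeRank T ≤ (ξ : WithTop Ordinal)) : Rk T ξ [] := by
  by_contra hR
  obtain ⟨hA, hr⟩ := Rk.acc ξ ⟨[], hT⟩ hR
  have hall : ∀ s : T, s.1 ≠ [] → Acc (fun t s : T => s.val <+: t.val ∧ s.val ≠ t.val) s :=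
    fun s hs => hA.inv ⟨List.nil_prefix, fun h => hs h.symm⟩
  have wf : WellFounded (fun t s : T => s.val <+: t.val ∧ s.val ≠ t.val) := by
    refine ⟨fun s => ?_⟩
    by_cases hs : s.1 = []
    · have : s = ⟨[], hT⟩ := Subtype.ext hs
      rw [this]; exact hA
    · exact hall s hs
  apply h
  rw [treeRank, dif_pos wf]
  rw [WithTop.coe_le_coe]
  apply Ordinal.iSup_le
  intro s
  apply Order.succ_le_of_lt
  refine lt_of_le_of_lt ?_ hr
  by_cases hs : s.1 = []
  · have : s = ⟨[], hT⟩ := Subtype.ext hs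
    subst this; exact le_rfl
  · exact (Acc.rank_lt_of_rel hA ⟨List.nil_prefix, fun h => hs h.symm⟩).le

lemma Rk.ext {T : Set (List 𝒲)} {β : Ordinal.{0}} (d : ℕ) : ∀ {l}, Rk T (β + d) l →
    ∃ t, l <+: t ∧ l.length + d ≤ t.length ∧ Rk T β t := by
  induction d with
  | zero => intro l h; exact ⟨l, List.prefix_rfl, by simp, by simpa using h⟩
  | succ d ih =>
    intro l h
    rw [Rk] at h
    obtain ⟨t, h1, h2, h3⟩ := h.2 (β + d) (by push_cast; rw [← add_assoc]; exact lt_add_of_pos_right _ zero_lt_one)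
    obtain ⟨t', h4, h5, h6⟩ := ih h3
    refine ⟨t', h1.trans h4, ?_, h6⟩
    have : l.length < t.length := lt_of_le_of_ne h1.length_le fun hh => h2 (h1.eq_of_length hh)
    omega

lemma nil_mem_embTree (x : ℕ → 𝒲) (Y : Set 𝒲) (K : ℝ) : [] ∈ embTree x Y K := by
  refine ⟨by simp, fun a => by simp⟩

lemma embIndex_gt {x : ℕ → 𝒲} {Y : Set 𝒲} {ξ : Ordinal.{0}} (h : ¬ embIndex x Y ≤ (ξ : WithTop Ordinal)) :
    ∃ K : ℝ, 1 ≤ K ∧ Rk (embTree x Y K) ξ [] := by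
  by_contra hc
  push Not at hc
  have hle : ∀ K : ℝ, 1 ≤ K → treeRank (embTree x Y K) ≤ (ξ : WithTop Ordinal) := by
    intro K hK
    by_contra hr
    exact hc K hK (Rk.of_rank (nil_mem_embTree _ _ _) hr)
  apply h
  rw [embIndex, if_neg]
  · rw [WithTop.coe_le_coe]
    apply csSup_le'
    rintro o ⟨K, hK, ho⟩
    have := hle K hK
    rw [← ho, WithTop.coe_le_coe] at this
    exact this
  · rintro ⟨K, hK, hT⟩
    have := hle K hK
    rw [hT] at this
    simp at this

lemma le_rank {T : Set (List 𝒲)} (Ψ : Ordinal.{0} → List 𝒲 → Prop)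
    (hΨ : ∀ ξ l, Ψ ξ l → l ∈ T ∧ ∀ η < ξ, ∃ v, Ψ η (l ++ [v])) {α : Ordinal.{0}} (h0 : Ψ α []) :
    ((α + 1 : Ordinal) : WithTop Ordinal) ≤ treeRank T := by
  rw [treeRank]
  split_ifs with wf
  · rw [WithTop.coe_le_coe]
    have key : ∀ ξ l (h : Ψ ξ l), ξ ≤ (wf.apply ⟨l, (hΨ ξ l h).1⟩).rank := by
      intro ξ
      induction ξ using WellFoundedLT.induction with
      | _ ξ ih =>
        intro l h
        by_contra hc
        push Not at hc
        obtain ⟨v, hv⟩ := (hΨ ξ l h).2 _ hc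
        have h1 := ih _ hc _ hv
        have hrel : (fun t s : T => s.val <+: t.val ∧ s.val ≠ t.val)
            ⟨l ++ [v], (hΨ _ _ hv).1⟩ ⟨l, (hΨ ξ l h).1⟩ := ⟨List.prefix_append _ _, by simp⟩
        have h2 := Acc.rank_lt_of_rel (wf.apply ⟨l, (hΨ ξ l h).1⟩) hrel
        exact absurd (h1.trans_lt h2) (lt_irrefl _)
    refine le_trans ?_ (Ordinal.le_iSup _ (⟨[], (hΨ _ _ h0).1⟩ : T))
    rw [← Order.succ_eq_add_one]
    exact Order.succ_le_succ (key _ _ h0)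
  · exact le_top

lemma le_embIndex {x : ℕ → 𝒲} {Y : Set 𝒲} {K : ℝ} (hK : 1 ≤ K) :
    treeRank (embTree x Y K) ≤ embIndex x Y := by
  rw [embIndex]
  split_ifs with h
  · exact le_top
  · push Not at h
    obtain ⟨o, ho⟩ := WithTop.ne_top_iff_exists.1 (h K hK)
    rw [← ho, WithTop.coe_le_coe]
    refine le_csSup ?_ ⟨K, hK, ho⟩
    have : {o : Ordinal.{0} | ∃ K : ℝ, 1 ≤ K ∧ (o : WithTop Ordinal) = treeRank (embTree x Y K)} ⊆
        Set.range (fun K : ℝ => (treeRank (embTree x Y K)).untopD 0) := by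
      rintro o ⟨K, hK, ho⟩
      exact ⟨K, by simp [← ho]⟩
    exact (Ordinal.bddAbove_of_small (s := Set.range _)).mono this

end Rosendal

namespace Rosendal

variable {𝒲 : Type} [NormedAddCommGroup 𝒲] [NormedSpace ℝ 𝒲]

lemma swap_bd {m : ℕ} {a : ℕ → ℝ} {g g' : ℕ → 𝒲} {t : 𝒲} {B T : ℝ}
    (h1 : ∀ i < m, |a i| * ‖g i‖ ≤ B) (h2 : ∀ i < m, ‖g' i‖ ≤ 2 * ‖g i‖) (h3 : ‖t‖ ≤ T) :
    ‖∑ i ∈ Finset.range m, a i • g' i + t‖ ≤ m * (2 * B) + T := by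
  refine (norm_add_le _ _).trans (add_le_add ?_ h3)
  refine (norm_sum_le _ _).trans ?_
  have : ∀ i ∈ Finset.range m, ‖a i • g' i‖ ≤ 2 * B := by
    intro i hi
    rw [Finset.mem_range] at hi
    rw [norm_smul, Real.norm_eq_abs]
    have := mul_le_mul_of_nonneg_left (h2 i hi) (abs_nonneg (a i))
    linarith [h1 i hi]
  refine (Finset.sum_le_card_nsmul _ _ _ this).trans ?_
  simp

noncomputable def Lsw (f : ℕ → Vq) (m : ℕ) : Vq →ₗ[ℚ] Vq :=
  Finsupp.linearCombination ℚ (fun i => if i < m then f i else Finsupp.single i 1)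

lemma Lsw_tl (f : ℕ → Vq) {m n : ℕ} (h : m ≤ n) {t : Vq} (ht : t ∈ Tl n) : Lsw f m t = t := by
  rw [Lsw, Finsupp.linearCombination_apply]
  conv_rhs => rw [← Finsupp.sum_single t]
  refine Finsupp.sum_congr fun i hi => ?_
  rw [Finsupp.mem_support_iff] at hi
  rw [if_neg]
  · simp
  · intro hh; exact hi (ht i (by omega))

lemma Lsw_hd (f : ℕ → Vq) {m : ℕ} {v : Vq} (hv : v ∈ Hd m) :
    Lsw f m v = ∑ i ∈ Finset.range m, v i • f i := by
  rw [Lsw, Finsupp.linearCombination_apply, Finsupp.sum_of_support_subset (s := Finset.range m)]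
  · refine Finset.sum_congr rfl fun i hi => ?_
    rw [if_pos (Finset.mem_range.1 hi)]
  · intro i hi
    rw [Finsupp.mem_support_iff] at hi
    rw [Finset.mem_range]
    by_contra hc
    exact hi (hv i (by omega))
  · simp

lemma io_hd (e : ℕ → 𝒲) {m : ℕ} {v : Vq} (hv : v ∈ Hd m) :
    io e v = ∑ i ∈ Finset.range m, (v i : ℝ) • e i := by
  rw [io_sum]
  refine Finset.sum_subset ?_ ?_
  · intro i hi
    rw [Finsupp.mem_support_iff] at hi
    rw [Finset.mem_range]
    by_contra hc
    exact hi (hv i (by omega))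
  · intro i _ hi
    rw [Finsupp.notMem_support_iff] at hi
    simp [hi]

lemma Lsw_bd {e : ℕ → 𝒲} (b : BProj e) {p f} (hf : IsBlk p f) (m : ℕ)
    (hn : ∀ i, ‖e i‖ ≤ ‖io e (f i)‖ ∧ ‖io e (f i)‖ ≤ 2 * ‖e i‖) {v : Vq} (hv : v ∈ Hd m ⊔ Tl (p m)) :
    ‖io e (Lsw f m v)‖ ≤ (4 * m * b.C ^ 2 + 1 + b.C) * ‖io e v‖ ∧
    ‖io e v‖ ≤ (4 * m * b.C ^ 2 + 1 + b.C) * ‖io e (Lsw f m v)‖ := by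
  have hC := b.hC
  have hpm : m ≤ p m := hf.1.le_apply
  obtain ⟨h, hh, t, ht, rfl⟩ := Submodule.mem_sup.1 hv
  set A := ∑ i ∈ Finset.range m, (h i : ℝ) • io e (f i) with hA
  have e1 : io e (Lsw f m (h + t)) = A + io e t := by
    rw [map_add, map_add, Lsw_tl f hpm ht, Lsw_hd f hh, map_sum]
    simp [hA, io_smul]
  have e2 : io e (h + t) = ∑ i ∈ Finset.range m, (h i : ℝ) • e i + io e t := by
    rw [map_add, io_hd e hh]
  have p2 : b.P m (io e (h + t)) = io e h := by
    rw [map_add, map_add, P_hd b hh le_rfl, P_tl b ht hpm, add_zero]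
  have pA : b.P (p m) (A + io e t) = A := by
    rw [map_add, P_tl b ht le_rfl, add_zero, hA, map_sum]
    refine Finset.sum_congr rfl fun i hi => ?_
    rw [map_smul, P_hd b (hf.2 i).2.2 (hf.1.monotone (Finset.mem_range.1 hi))]
  constructor
  · rw [e1]
    set s := ‖io e (h + t)‖ with hs
    have hh1 : ‖io e h‖ ≤ b.C * s := by rw [← p2]; exact b.hP _ _
    have ht1 : ‖io e t‖ ≤ (1 + b.C) * s := by
      have : io e t = io e (h + t) - io e h := by rw [map_add]; abel
      rw [this]
      refine (norm_sub_le _ _).trans ?_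
      rw [← hs]; linarith
    refine (swap_bd (g := e) (B := 2 * b.C * (b.C * s)) ?_ (fun i _ => (hn i).2) ht1).trans (le_of_eq (by ring))
    intro i _
    refine (coord_le b h i).trans ?_
    gcongr
  · rw [e1, e2]
    set s := ‖A + io e t‖ with hs
    have hh1 : ‖A‖ ≤ b.C * s := by rw [hs]; conv_lhs => rw [← pA]
                                   exact b.hP _ _
    have ht1 : ‖io e t‖ ≤ (1 + b.C) * s := by
      have : io e t = (A + io e t) - A := by abel
      rw [this]
      refine (norm_sub_le _ _).trans ?_
      rw [← hs]; linarith
    refine (swap_bd (g := fun i => io e (f i)) (B := 2 * b.C * (b.C * s)) ?_ (fun i _ => ?_) ht1).trans (le_of_eq (by ring))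
    · intro i hi
      refine ((hf.rblk b).coef m (fun i => (h i : ℝ)) i hi).trans ?_
      gcongr
    · have := (hn i).1
      linarith [norm_nonneg (io e (f i))]

lemma shift_step {e : ℕ → 𝒲} (b : BProj e) {p f} (hf : IsBlk p f) (m : ℕ)
    (hn : ∀ i, ‖e i‖ ≤ ‖io e (f i)‖ ∧ ‖io e (f i)‖ ≤ 2 * ‖e i‖) {K : ℝ} (hK : 0 ≤ K) {Y X : SV}
    (ξ : Ordinal.{0}) : ∀ (E : SV) (G : SG), E ≤ Hd m ⊔ Tl (p m) → G.map sndM ≤ E →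
      PiG (fun v => ‖io e v‖) K Y X ξ E G →
      PiG (fun v => ‖io e v‖) (K * (4 * m * b.C ^ 2 + 1 + b.C)) Y X ξ (E.map (Lsw f m))
        (G.map (LinearMap.id.prodMap (Lsw f m))) := by
  set c := 4 * m * b.C ^ 2 + 1 + b.C with hc
  have hpm : m ≤ p m := hf.1.le_apply
  induction ξ using WellFoundedLT.induction with
  | _ ξ ih =>
    intro E G hE hG h
    rw [PiG] at h ⊢
    refine ⟨?_, ?_⟩
    · rintro _ ⟨q, hq, rfl⟩
      have hq2 : q.2 ∈ Hd m ⊔ Tl (p m) := hE (hG ⟨q, hq, rfl⟩)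
      have hb := Lsw_bd b hf m hn hq2
      rw [← hc] at hb
      obtain ⟨g1, g2⟩ := h.1 q hq
      simp only [LinearMap.prodMap_apply, LinearMap.id_coe, id_eq]
      constructor
      · refine g1.trans ?_
        rw [mul_assoc]
        exact mul_le_mul_of_nonneg_left hb.2 hK
      · refine hb.1.trans ?_
        have hc0 : 0 ≤ c := by have := b.hC; positivity
        refine (mul_le_mul_of_nonneg_left g2 hc0).trans (le_of_eq (by ring))
    · intro η hη n S hS hSY
      obtain ⟨F, G', hF, hFX, hG', hGG', hS', hsnd, hP⟩ := h.2 η hη (max n (p m)) S hS hSY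
      have hFM : F ≤ Tl (p m) := hFX.trans (inf_le_right.trans (Tl_anti (le_max_right _ _)))
      have hFL : F.map (Lsw f m) = F := by
        apply le_antisymm
        · rintro _ ⟨v, hv, rfl⟩
          rw [Lsw_tl f hpm (hFM hv)]; exact hv
        · intro v hv
          exact ⟨v, hv, Lsw_tl f hpm (hFM hv)⟩
      have hE' : E ⊔ F ≤ Hd m ⊔ Tl (p m) := sup_le hE (hFM.trans le_sup_right)
      have := ih η hη _ _ hE' hsnd hP
      rw [Submodule.map_sup, hFL] at this
      refine ⟨F, _, hF, hFX.trans (inf_le_inf_left _ (Tl_anti (le_max_left _ _))), hG'.map _,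
        Submodule.map_mono hGG', ?_, ?_, this⟩
      · intro v hv
        obtain ⟨q, hq, rfl⟩ := hS' hv
        exact ⟨_, ⟨q, hq, rfl⟩, rfl⟩
      · rintro _ ⟨_, ⟨q, hq, rfl⟩, rfl⟩
        have h1 : q.2 ∈ E ⊔ F := hsnd ⟨q, hq, rfl⟩
        have h2 : Lsw f m q.2 ∈ (E ⊔ F).map (Lsw f m) := ⟨_, h1, rfl⟩
        rw [Submodule.map_sup, hFL] at h2
        exact h2

lemma rescale {e : ℕ → 𝒲} (b : BProj e) {v : Vq} (hv : v ≠ 0) {r : ℝ} (hr : 0 < r) :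
    ∃ q : ℚ, q ≠ 0 ∧ r ≤ ‖io e (q • v)‖ ∧ ‖io e (q • v)‖ ≤ 2 * r := by
  have h0 : 0 < ‖io e v‖ := norm_pos_iff.2 (io_ne b hv)
  obtain ⟨q, h1, h2⟩ := exists_rat_btwn (show r / ‖io e v‖ < 2 * r / ‖io e v‖ by gcongr; linarith)
  have hq : (0 : ℝ) < q := lt_trans (by positivity) h1
  refine ⟨q, by rintro rfl; simp at hq, ?_, ?_⟩
  · rw [io_smul, norm_smul, Real.norm_eq_abs, abs_of_pos hq]
    rw [div_lt_iff₀ h0] at h1; exact h1.le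
  · rw [io_smul, norm_smul, Real.norm_eq_abs, abs_of_pos hq]
    rw [lt_div_iff₀ h0] at h2; exact h2.le

lemma shift {e : ℕ → 𝒲} (b : BProj e) (m : ℕ) {K : ℝ} (hK : 0 ≤ K) {Y X : SV} (hX : Big X)
    {ξ : Ordinal.{0}} (h : PiG (fun v => ‖io e v‖) K Y X ξ (Hd m) ⊥) :
    PiG (fun v => ‖io e v‖) (K * (4 * m * b.C ^ 2 + 1 + b.C)) Y X ξ ⊥ ⊥ := by
  rw [PiG] at h ⊢
  refine ⟨?_, ?_⟩
  · rintro q hq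
    rw [Submodule.mem_bot] at hq
    subst hq
    simp
  · intro η hη n S hS hSY
    obtain ⟨p, f, hp, hf⟩ := exists_block (fun k _ v => v ∈ X ⊓ Tl n ∧ ‖e k‖ ≤ ‖io e v‖ ∧ ‖io e v‖ ≤ 2 * ‖e k‖)
      (by
        intro k n'
        obtain ⟨v, hv, hv0, hvt⟩ := hX (max n n')
        obtain ⟨q, hq, h1, h2⟩ := rescale b hv0 (norm_pos_iff.2 (b.ne k))
        exact ⟨q • v, smul_ne_zero hq hv0, Submodule.smul_mem _ _ (Tl_anti (le_max_right _ _) hvt),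
          ⟨X.smul_mem _ hv, Submodule.smul_mem _ _ (Tl_anti (le_max_left _ _) hvt)⟩, h1, h2⟩)
    have hblk : IsBlk p f := ⟨hp, fun k => ⟨(hf k).1, (hf k).2.1, (hf k).2.2.1⟩⟩
    obtain ⟨F, G', hF, hFX, hG', hGG', hS', hsnd, hP⟩ := h.2 η hη (max n (p m)) S hS hSY
    have hpm : m ≤ p m := hblk.1.le_apply
    have hFM : F ≤ Tl (p m) := hFX.trans (inf_le_right.trans (Tl_anti (le_max_right _ _)))
    have := shift_step b hblk m (fun i => (hf i).2.2.2.2) hK η _ _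
      (sup_le le_sup_left (hFM.trans le_sup_right)) hsnd hP
    set F' : SV := Submodule.span ℚ (f '' Set.Iio m) ⊔ F with hF'
    have hmap : (Hd m ⊔ F).map (Lsw f m) ≤ F' := by
      rw [Submodule.map_sup]
      apply sup_le_sup
      · rintro _ ⟨v, hv, rfl⟩
        rw [Lsw_hd f hv]
        refine Submodule.sum_mem _ fun i hi => Submodule.smul_mem _ _ (Submodule.subset_span ⟨i, Finset.mem_range.1 hi, rfl⟩)
      · rintro _ ⟨v, hv, rfl⟩
        rw [Lsw_tl f hpm (hFM hv)]; exact hv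
    refine ⟨F', _, ?_, ?_, hG'.map _, bot_le, ?_, ?_, (PiG.mono le_rfl (m := 0) inf_le_left (hmap.trans (le_sup_right)) this : PiG _ _ Y X η (⊥ ⊔ F') _)⟩
    · exact (Submodule.fg_span ((Set.finite_Iio m).image f)).sup hF
    · refine sup_le (Submodule.span_le.2 ?_) (hFX.trans (inf_le_inf_left _ (Tl_anti (le_max_left _ _))))
      rintro _ ⟨i, _, rfl⟩
      exact (hf i).2.2.2.1
    · intro v hv
      obtain ⟨q, hq, rfl⟩ := hS' hv
      exact ⟨_, ⟨q, hq, rfl⟩, rfl⟩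
    · rintro _ ⟨_, ⟨q, hq, rfl⟩, rfl⟩
      exact Submodule.mem_sup_right (hmap ⟨_, hsnd ⟨q, hq, rfl⟩, rfl⟩)

end Rosendal

namespace Rosendal

variable {𝒲 : Type} [NormedAddCommGroup 𝒲] [NormedSpace ℝ 𝒲]

lemma span_fin {R V : Type} [Field R] [AddCommGroup V] [Module R V] {g : ℕ → V} {S : Finset ℕ} {v : V}
    (hv : v ∈ Submodule.span R (g '' (S : Set ℕ))) : ∃ a : ℕ → R, ∑ i ∈ S, a i • g i = v := by
  classical
  induction hv using Submodule.span_induction with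
  | mem v hv =>
    obtain ⟨i, hi, rfl⟩ := hv
    refine ⟨fun j => if j = i then 1 else 0, ?_⟩
    rw [Finset.sum_eq_single i]
    · simp
    · intro j _ hj; simp [hj]
    · intro h; exact absurd hi h
  | zero => exact ⟨0, by simp⟩
  | add v w _ _ h1 h2 =>
    obtain ⟨a, rfl⟩ := h1
    obtain ⟨c, rfl⟩ := h2
    exact ⟨a + c, by simp [add_smul, Finset.sum_add_distrib]⟩
  | smul r v _ h =>
    obtain ⟨a, rfl⟩ := h
    exact ⟨r • a, by simp [Finset.smul_sum, mul_smul]⟩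

lemma net_one {e : ℕ → 𝒲} (x : ℕ → Vq) (S : Finset ℕ) (R : ℝ) {δ : ℝ} (hδ : 0 < δ) :
    ∃ T : Finset Vq, ∀ v ∈ Submodule.span ℝ ((fun k => io e (x k)) '' (S : Set ℕ)), ‖v‖ ≤ R →
      ∃ w ∈ T, w ∈ Submodule.span ℚ (x '' (S : Set ℕ)) ∧ ‖v - io e w‖ ≤ δ := by
  set V := Submodule.span ℝ ((fun k => io e (x k)) '' (S : Set ℕ)) with hV
  have : FiniteDimensional ℝ V := FiniteDimensional.span_of_finite ℝ (S.finite_toSet.image _)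
  have hcomp : IsCompact ((fun v : V => (v : 𝒲)) '' Metric.closedBall (0 : V) R) :=
    (isCompact_closedBall (0 : V) R).image continuous_subtype_val
  obtain ⟨T, hT⟩ := hcomp.elim_finite_subcover
    (fun w : {w : Vq // w ∈ Submodule.span ℚ (x '' (S : Set ℕ))} => Metric.ball (io e w.1) δ)
    (fun _ => Metric.isOpen_ball) (by
      rintro _ ⟨v, _, rfl⟩
      have hv : (v : 𝒲) ∈ Submodule.span ℝ ((fun k => io e (x k)) '' (S : Set ℕ)) := v.2
      obtain ⟨a, ha⟩ := span_fin hv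
      obtain ⟨r, hr⟩ := rat_approx (fun k => io e (x k)) S a hδ
      rw [ha] at hr
      refine Set.mem_iUnion.2 ⟨⟨∑ i ∈ S, r i • x i, ?_⟩, ?_⟩
      · exact Submodule.sum_mem _ fun i hi => Submodule.smul_mem _ _ (Submodule.subset_span ⟨i, hi, rfl⟩)
      · rw [Metric.mem_ball, dist_eq_norm, map_sum]
        simpa [io_smul] using hr)
  classical
  refine ⟨T.image Subtype.val, fun v hv hvR => ?_⟩
  have := hT ⟨⟨v, hv⟩, by simpa using hvR, rfl⟩
  simp only [Set.mem_iUnion] at this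
  obtain ⟨w, hw, hb⟩ := this
  refine ⟨w.1, Finset.mem_image_of_mem _ hw, w.2, ?_⟩
  rw [Metric.mem_ball, dist_eq_norm] at hb
  exact hb.le

lemma net_all {e : ℕ → 𝒲} (x : ℕ → Vq) (R : ℕ → ℕ → ℝ) (δ : ℕ → ℕ → ℝ) (hδ : ∀ a i, 0 < δ a i) :
    ∃ H : ℕ → Finset Vq, Monotone H ∧ ∀ a, ∀ S ⊆ Finset.range a, ∀ i < a,
      ∀ v ∈ Submodule.span ℝ ((fun k => io e (x k)) '' (S : Set ℕ)), ‖v‖ ≤ R a i →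
      ∃ w ∈ H a, w ∈ Submodule.span ℚ (x '' (S : Set ℕ)) ∧ ‖v - io e w‖ ≤ δ a i := by
  classical
  choose T hT using fun (S : Finset ℕ) (a i : ℕ) => net_one (e := e) x S (R a i) (hδ a i)
  refine ⟨fun a => (Finset.range (a + 1)).biUnion fun a' => (Finset.range a').powerset.biUnion fun S =>
    (Finset.range a').biUnion fun i => T S a' i, ?_, ?_⟩
  · intro a a' h
    apply Finset.biUnion_subset_biUnion_of_subset_left
    intro i hi
    simp only [Finset.mem_range] at hi ⊢
    omega
  · intro a S hS i hi v hv hR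
    obtain ⟨w, hw, h1, h2⟩ := hT S a i v hv hR
    refine ⟨w, ?_, h1, h2⟩
    simp only [Finset.mem_biUnion, Finset.mem_range, Finset.mem_powerset]
    exact ⟨a, by omega, S, hS, i, hi, hw⟩

def FailAt (N : Vq → ℝ) (K : ℝ) (Y X : SV) (E : SV) (G : SG) (n : ℕ) : Prop :=
  ∀ ξ : Ordinal.{0}, Good N K G → ¬ PiG N K Y X ξ E G → ∃ η < ξ, ∃ S : SV, S.FG ∧ S ≤ Y ∧
    ∀ (F : SV) (G' : SG), F.FG → F ≤ X ⊓ Tl n → G'.FG → G ≤ G' → S ≤ G'.map fstM →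
      G'.map sndM ≤ E ⊔ F → ¬ PiG N K Y X η (E ⊔ F) G'

lemma FailAt.mono {N K Y X E G n n'} (h : FailAt N K Y X E G n) (hn : n ≤ n') :
    FailAt N K Y X E G n' := by
  intro ξ hG hP
  obtain ⟨η, hη, S, h1, h2, h3⟩ := h ξ hG hP
  exact ⟨η, hη, S, h1, h2, fun F G' hF hFX => h3 F G' hF (hFX.trans (inf_le_inf_left _ (Tl_anti hn)))⟩

lemma exists_failAt (N : Vq → ℝ) (K : ℝ) (Y X : SV) (E : SV) (G : SG) : ∃ n, FailAt N K Y X E G n := by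
  by_cases hex : ∃ ξ : Ordinal.{0}, Good N K G ∧ ¬ PiG N K Y X ξ E G
  · have hG := hex.choose_spec.1
    obtain ⟨ξ₀, h0, hmin⟩ : ∃ ξ₀ : Ordinal.{0}, ¬ PiG N K Y X ξ₀ E G ∧ ∀ ξ, ¬ PiG N K Y X ξ E G → ξ₀ ≤ ξ := by
      have hne : {ξ : Ordinal.{0} | ¬ PiG N K Y X ξ E G}.Nonempty := ⟨_, hex.choose_spec.2⟩
      exact ⟨sInf _, csInf_mem hne, fun ξ hξ => csInf_le' hξ⟩
    rw [PiG] at h0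
    have h1 := not_and.1 h0 hG
    push Not at h1
    obtain ⟨η, hη, n, S, hS, hSY, h2⟩ := h1
    exact ⟨n, fun ξ _ hP => ⟨η, hη.trans_le (hmin ξ hP), S, hS, hSY, h2⟩⟩
  · push Not at hex
    exact ⟨0, fun ξ hG hP => absurd (hex ξ hG) hP⟩

lemma exists_B {N : Vq → ℝ} {Y X : SV} (x y' : ℕ → Vq) (H : ℕ → Finset Vq) :
    ∃ B : ℕ → ℕ, ∀ a, a ≤ B a ∧ ∀ K : ℕ, K ≤ a → ∀ S ⊆ Finset.range a, ∀ T : Set (Vq × Vq),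
      T ⊆ (y' '' Set.Iio a) ×ˢ (H a : Set Vq) →
      FailAt N K Y X (Submodule.span ℚ (x '' (S : Set ℕ))) (Submodule.span ℚ T) (B a) := by
  classical
  choose n hn using fun (K : ℕ) (E : SV) (G : SG) => exists_failAt N K Y X E G
  have : ∀ a, ∃ B, a ≤ B ∧ ∀ K : ℕ, K ≤ a → ∀ S ⊆ Finset.range a, ∀ T : Set (Vq × Vq),
      T ⊆ (y' '' Set.Iio a) ×ˢ (H a : Set Vq) →
      n K (Submodule.span ℚ (x '' (S : Set ℕ))) (Submodule.span ℚ T) ≤ B := by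
    intro a
    set Q : Set (Vq × Vq) := (y' '' Set.Iio a) ×ˢ (H a : Set Vq)
    have hQ : Q.Finite := ((Set.finite_Iio a).image _).prod (H a).finite_toSet
    have hfin : ((Set.Iic a) ×ˢ ({S : Finset ℕ | S ⊆ Finset.range a} ×ˢ {T : Set (Vq × Vq) | T ⊆ Q})).Finite := by
      refine (Set.finite_Iic a).prod (Set.Finite.prod ?_ hQ.finite_subsets)
      exact ((Finset.range a).powerset.finite_toSet).subset fun S hS => Finset.mem_coe.2 (Finset.mem_powerset.2 hS)
    obtain ⟨B, hB⟩ := (hfin.image (fun z : ℕ × Finset ℕ × Set (Vq × Vq) =>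
      n z.1 (Submodule.span ℚ (x '' (z.2.1 : Set ℕ))) (Submodule.span ℚ z.2.2))).bddAbove
    refine ⟨max a B, le_max_left _ _, fun K hK S hS T hT => ?_⟩
    exact (hB ⟨(K, S, T), ⟨hK, hS, hT⟩, rfl⟩).trans (le_max_right _ _)
  choose B hB1 hB2 using this
  exact ⟨B, fun a => ⟨hB1 a, fun K hK S hS T hT => (hn _ _ _).mono (hB2 a K hK S hS T hT)⟩⟩

lemma span_pairs {y' u : ℕ → Vq} {k : ℕ} {q : Vq × Vq}
    (hq : q ∈ Submodule.span ℚ ((fun i => (y' i, u i)) '' Set.Iio k)) :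
    ∃ r : ℕ → ℚ, q.1 = ∑ i ∈ Finset.range k, r i • y' i ∧ q.2 = ∑ i ∈ Finset.range k, r i • u i := by
  have : (Set.Iio k) = (Finset.range k : Set ℕ) := by ext; simp
  rw [this] at hq
  obtain ⟨r, hr⟩ := span_fin hq
  refine ⟨r, ?_, ?_⟩
  · rw [← hr, Prod.fst_sum]; simp
  · rw [← hr, Prod.snd_sum]; simp

lemma good_pairs {e : ℕ → 𝒲} (b : BProj e) {q y} (hy : RBlk b q y) {y' u : ℕ → Vq} {k : ℕ} {l : ℕ → 𝒲}
    (hy' : ∀ k (a : ℕ → ℝ),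
        1 / 2 * ‖∑ i ∈ Finset.range k, a i • y i‖ ≤ ‖∑ i ∈ Finset.range k, a i • io e (y' i)‖ ∧
        ‖∑ i ∈ Finset.range k, a i • io e (y' i)‖ ≤ 2 * ‖∑ i ∈ Finset.range k, a i • y i‖)
    {K K' : ℝ} (hK : 1 ≤ K) (hK' : 4 * K + 4 ≤ K') (hl : SeqEquiv K k l y)
    (hu : ∀ i < k, ‖io e (u i) - l i‖ ≤ 1 / (2 * K) / (2 * b.C) * (1 / 2) ^ (i + 1) * ‖y i‖) :
    Good (fun v => ‖io e v‖) K' (Submodule.span ℚ ((fun i => (y' i, u i)) '' Set.Iio k)) := by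
  intro q hq
  obtain ⟨r, h1, h2⟩ := span_pairs hq
  have hC := b.hC
  obtain ⟨ha, hb⟩ := hy' k (fun i => (r i : ℝ))
  obtain ⟨hc, hd⟩ := hl (fun i => (r i : ℝ))
  have hp := pert (D := 2 * b.C) (t := 1 / (2 * K)) (by linarith) (by positivity) (fun i => (r i : ℝ))
    (fun i hi => hy.coef k (fun i => (r i : ℝ)) i hi) hu
  have hs1 : io e q.1 = ∑ i ∈ Finset.range k, (r i : ℝ) • io e (y' i) := by
    rw [h1, map_sum]; simp [io_smul]
  have hs2 : io e q.2 = ∑ i ∈ Finset.range k, (r i : ℝ) • io e (u i) := by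
    rw [h2, map_sum]; simp [io_smul]
  simp only [smul_sub, Finset.sum_sub_distrib] at hp
  rw [← hs1] at ha hb
  rw [← hs2] at hp
  simp only
  set s := ‖∑ i ∈ Finset.range k, (r i : ℝ) • y i‖
  set z := ∑ i ∈ Finset.range k, (r i : ℝ) • l i
  set A := ‖io e q.1‖
  have hs : 0 ≤ s := norm_nonneg _
  have hA : 0 ≤ A := norm_nonneg _
  have hK0 : 0 < K := by linarith
  have n1 := norm_sub_norm_le z (io e q.2)
  rw [norm_sub_rev] at n1
  have n2 := norm_sub_norm_le (io e q.2) z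
  set Bq := ‖io e q.2‖
  have hBq : 0 ≤ Bq := norm_nonneg _
  have hzz : ‖z‖ ≤ K * s := by
    rw [one_div, inv_mul_le_iff₀ hK0] at hc; exact hc
  have i1 : 1 / (2 * K) * s = s / K / 2 := by field_simp
  have i2 : s / K ≤ ‖z‖ := by rw [div_le_iff₀ hK0]; linarith
  have i3 : s / K ≤ s := div_le_self hs hK
  have i4 : s = K * (s / K) := by field_simp
  rw [i1] at hp
  constructor
  · -- lower bound
    have : s / K / 2 ≤ Bq := by linarith
    have : s ≤ 2 * K * Bq := by rw [i4]; nlinarith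
    nlinarith
  · have : Bq ≤ (K + 1) * s := by nlinarith
    nlinarith

end Rosendal

namespace Rosendal

variable {𝒲 : Type} [NormedAddCommGroup 𝒲] [NormedSpace ℝ 𝒲]

lemma span_set_fin {g : ℕ → 𝒲} {s : Set ℕ} {v : 𝒲} (hv : v ∈ Submodule.span ℝ (g '' s)) :
    ∃ S : Finset ℕ, (S : Set ℕ) ⊆ s ∧ v ∈ Submodule.span ℝ (g '' (S : Set ℕ)) := by
  obtain ⟨c, hc, rfl⟩ := (Finsupp.mem_span_image_iff_linearCombination ℝ).1 hv
  refine ⟨c.support, hc, ?_⟩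
  exact (Finsupp.mem_span_image_iff_linearCombination ℝ).2 ⟨c, fun i hi => hi, rfl⟩

lemma closedSpan_approx {g : ℕ → 𝒲} {s : Set ℕ} {v : 𝒲} (hv : v ∈ closedSpan (g '' s)) {ε : ℝ} (hε : 0 < ε) :
    ∃ S : Finset ℕ, (S : Set ℕ) ⊆ s ∧ ∃ w ∈ Submodule.span ℝ (g '' (S : Set ℕ)), ‖w - v‖ < ε := by
  have hv' : v ∈ closure (Submodule.span ℝ (g '' s) : Set 𝒲) := hv
  obtain ⟨w, hw, hd⟩ := Metric.mem_closure_iff.1 hv' ε hε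
  obtain ⟨S, h1, h2⟩ := span_set_fin hw
  exact ⟨S, h1, w, h2, by rw [dist_comm, dist_eq_norm] at hd; exact hd⟩

lemma residual_eq (g : ℕ → 𝒲) (I : ℕ → Finset ℕ) (A : Set ℕ) :
    residualSpace g I A = closedSpan (g '' {n | ∀ m ∈ A, n ∉ I m}) := by
  rw [residualSpace]
  congr 1
  ext v
  simp only [Set.mem_setOf_eq, Set.mem_image]
  constructor
  · rintro ⟨n, h, rfl⟩; exact ⟨n, h, rfl⟩
  · rintro ⟨n, h, rfl⟩; exact ⟨n, h, rfl⟩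

lemma fg_le_prefix {y' : ℕ → Vq} {S : SV} (hS : S.FG) (hSY : S ≤ Submodule.span ℚ (Set.range y')) :
    ∃ d : ℕ, S ≤ Submodule.span ℚ (y' '' Set.Iio d) := by
  obtain ⟨t, rfl⟩ := hS
  have : ∀ v ∈ t, ∃ d : ℕ, v ∈ Submodule.span ℚ (y' '' Set.Iio d) := by
    intro v hv
    have h1 := hSY (Submodule.subset_span hv)
    rw [← Set.image_univ] at h1
    obtain ⟨c, hc, rfl⟩ := (Finsupp.mem_span_image_iff_linearCombination ℚ).1 h1
    refine ⟨c.support.sup id + 1, (Finsupp.mem_span_image_iff_linearCombination ℚ).2 ⟨c, fun i hi => ?_, rfl⟩⟩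
    have : i ≤ c.support.sup id := Finset.le_sup (f := id) hi
    simp only [Set.mem_Iio]; omega
  choose! d hd using this
  refine ⟨t.sup d, Submodule.span_le.2 fun v hv => ?_⟩
  refine Submodule.span_mono (Set.image_mono (Set.Iio_subset_Iio (Finset.le_sup hv))) (hd v hv)

lemma claim {e : ℕ → 𝒲} (b : BProj e) {p x} (hx : IsBlk p x) {q y} (hy : RBlk b q y) {y' : ℕ → Vq}
    (hy' : ∀ k (a : ℕ → ℝ),
        1 / 2 * ‖∑ i ∈ Finset.range k, a i • y i‖ ≤ ‖∑ i ∈ Finset.range k, a i • io e (y' i)‖ ∧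
        ‖∑ i ∈ Finset.range k, a i • io e (y' i)‖ ≤ 2 * ‖∑ i ∈ Finset.range k, a i • y i‖)
    {K : ℝ} {K' : ℕ} (hK : 1 ≤ K) (hK' : 4 * K + 4 ≤ K')
    {H : ℕ → Finset Vq} (hHm : Monotone H)
    (hH : ∀ a, ∀ S ⊆ Finset.range a, ∀ i < a,
      ∀ v ∈ Submodule.span ℝ ((fun k => io e (x k)) '' (S : Set ℕ)), ‖v‖ ≤ a * ‖y i‖ →
      ∃ w ∈ H a, w ∈ Submodule.span ℚ (x '' (S : Set ℕ)) ∧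
        ‖v - io e w‖ ≤ 1 / (2 * (a + 1)) / (2 * b.C) * (1 / 2) ^ (i + 1) * ‖y i‖ / 2)
    {B : ℕ → ℕ} (hB : ∀ a, ∀ K : ℕ, K ≤ a → ∀ S ⊆ Finset.range a, ∀ T : Set (Vq × Vq),
      T ⊆ (y' '' Set.Iio a) ×ˢ (H a : Set Vq) →
      FailAt (fun v => ‖io e v‖) K (Submodule.span ℚ (Set.range y')) (Submodule.span ℚ (Set.range x))
        (Submodule.span ℚ (x '' (S : Set ℕ))) (Submodule.span ℚ T) (B a))
    {a : ℕ → ℕ} (ha : StrictMono a) {A : Set ℕ} (hA : A.Infinite)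
    {al : ℕ → Prop} (hal : ∀ i, al i ↔ ∀ m ∈ A, i ∉ Finset.Icc (a m) (B (a m))) (ξ : Ordinal.{0}) :
    ∀ j ∈ A, K' ≤ a j → ∀ (l : List 𝒲) (u : ℕ → Vq),
      Rk (embTree y (closedSpan ((fun k => io e (x k)) '' {i | al i}) : Set 𝒲) K) (Ordinal.omega0 * ξ) l →
      l.length ≤ a j →
      (∀ i < l.length, u i ∈ H (a j) ∧ u i ∈ Submodule.span ℚ (x '' {i | i < a j ∧ al i}) ∧
        ‖io e (u i) - l.getD i 0‖ ≤ 1 / (2 * K) / (2 * b.C) * (1 / 2) ^ (i + 1) * ‖y i‖) →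
      PiG (fun v => ‖io e v‖) K' (Submodule.span ℚ (Set.range y')) (Submodule.span ℚ (Set.range x)) ξ
        (Submodule.span ℚ (x '' {i | i < a j ∧ al i}))
        (Submodule.span ℚ ((fun i => (y' i, u i)) '' Set.Iio l.length)) := by
  classical
  have hC := b.hC
  induction ξ using WellFoundedLT.induction with
  | _ ξ ih =>
    intro j hj hKj l u hR hlen hu
    by_contra hcon
    have hgood := good_pairs b hy (u := u) (k := l.length) (l := fun i => l.getD i 0) hy' hK hK'
      hR.mem.2 (fun i hi => (hu i hi).2.2)
    have hS0 : {i | i < a j ∧ al i} = (((Finset.range (a j)).filter al : Finset ℕ) : Set ℕ) := by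
      ext i; simp
    rw [hS0] at hcon
    obtain ⟨η, hη, S, hSfg, hSY, hfail⟩ := hB (a j) K' hKj ((Finset.range (a j)).filter al)
      (Finset.filter_subset _ _) ((fun i => (y' i, u i)) '' Set.Iio l.length) (by
        rintro _ ⟨i, hi, rfl⟩
        exact ⟨⟨i, lt_of_lt_of_le hi hlen, rfl⟩, (hu i hi).1⟩) ξ hgood hcon
    rw [← hS0] at hfail
    obtain ⟨d, hd⟩ := fg_le_prefix hSfg hSY
    have hord : Ordinal.omega0 * η + d ≤ Ordinal.omega0 * ξ := by
      have h1 : Order.succ η ≤ ξ := Order.succ_le_of_lt hη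
      calc Ordinal.omega0 * η + d ≤ Ordinal.omega0 * η + Ordinal.omega0 := by
            gcongr; exact (Ordinal.nat_lt_omega0 d).le
        _ = Ordinal.omega0 * Order.succ η := (Ordinal.mul_succ _ _).symm
        _ ≤ Ordinal.omega0 * ξ := by gcongr
    obtain ⟨l', hpre, hlen', hR'⟩ := Rk.ext d (hR.ord hord)
    have hmem := hR'.mem
    have hyi : ∀ i, 0 < ‖y i‖ := fun i => norm_pos_iff.2 (hy.2 i).1
    set ε : ℕ → ℝ := fun i => 1 / (2 * K) / (2 * b.C) * (1 / 2) ^ (i + 1) * ‖y i‖ with hε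
    have hεp : ∀ i, 0 < ε i := fun i => by
      have := hyi i
      have : 0 < K := by linarith
      have : 0 < b.C := by linarith
      rw [hε]; positivity
    -- approximate entries of the extension
    have happ : ∀ i, ∃ S : Finset ℕ, (S : Set ℕ) ⊆ {i | al i} ∧
        ∃ w ∈ Submodule.span ℝ ((fun k => io e (x k)) '' (S : Set ℕ)), ‖w - l'.getD i 0‖ < ε i / 2 := by
      intro i
      apply closedSpan_approx
      · by_cases hi : i < l'.length
        · rw [List.getD_eq_getElem _ _ hi]
          exact hmem.1 _ (List.getElem_mem hi)
        · rw [List.getD_eq_default _ _ (by omega)]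
          exact Submodule.zero_mem _
      · exact half_pos (hεp i)
    choose Sf hSf w hw hwd using happ
    -- choose the next index
    obtain ⟨N, hN⟩ : ∃ N : ℕ, ∀ i < l'.length, ∀ k ∈ Sf i, k < N := by
      refine ⟨((Finset.range l'.length).biUnion Sf).sup id + 1, fun i hi k hk => ?_⟩
      have : k ≤ ((Finset.range l'.length).biUnion Sf).sup id :=
        Finset.le_sup (f := id) (Finset.mem_biUnion.2 ⟨i, Finset.mem_range.2 hi, hk⟩)
      omega
    obtain ⟨j', hj', hjl⟩ := hA.exists_gt (max j (max N l'.length))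
    have hja : j' ≤ a j' := ha.le_apply
    have hjj : j < j' := by omega
    have haj : a j < a j' := ha hjj
    have hNa : N ≤ a j' := by omega
    have hla : l'.length < a j' := by omega
    -- norms of the tree entries
    have hln : ∀ i < l'.length, ‖l'.getD i 0‖ ≤ K * ‖y i‖ := by
      intro i hi
      have h := (hmem.2 (fun k => if k = i then 1 else 0)).1
      simp only [ite_smul, one_smul, zero_smul, Finset.sum_ite_eq', Finset.mem_range, hi, if_true] at h
      rwa [one_div, inv_mul_le_iff₀ (by linarith)] at h
    have hKa : K + 1 ≤ (a j' : ℝ) := by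
      have : (K' : ℝ) ≤ a j' := by exact_mod_cast hKj.trans haj.le
      linarith
    have hεy : ∀ i, ε i ≤ ‖y i‖ := by
      intro i
      have h1 : 1 / (2 * K) / (2 * b.C) * (1 / 2) ^ (i + 1) ≤ 1 := by
        have h2 : 1 / (2 * K) ≤ 1 := by rw [div_le_one (by linarith)]; linarith
        have h3 : 1 / (2 * K) / (2 * b.C) ≤ 1 := by rw [div_le_one (by linarith)]; linarith
        exact mul_le_one₀ h3 (by positivity) (pow_le_one₀ (by norm_num) (by norm_num))
      simpa [hε] using mul_le_mul_of_nonneg_right h1 (norm_nonneg (y i))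
    have hnew : ∀ i, i < l'.length → ∃ w' ∈ H (a j'), w' ∈ Submodule.span ℚ (x '' {i | i < a j' ∧ al i}) ∧
        ‖io e w' - l'.getD i 0‖ ≤ ε i := by
      intro i hi
      obtain ⟨w', h1, h2, h3⟩ := hH (a j') (Sf i) (fun k hk => Finset.mem_range.2 ((hN i hi k hk).trans_le hNa)) i
        (hi.trans hla) (w i) (hw i) (by
          have t1 : ‖w i‖ ≤ ‖w i - l'.getD i 0‖ + ‖l'.getD i 0‖ := by
            simpa using norm_add_le (w i - l'.getD i 0) (l'.getD i 0)
          have t2 := hln i hi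
          have t3 := hwd i
          have t4 := hεy i
          have t5 := mul_le_mul_of_nonneg_right hKa (norm_nonneg (y i))
          have t6 := hyi i
          linarith)
      have hsub : (Sf i : Set ℕ) ⊆ {i | i < a j' ∧ al i} := fun k hk => ⟨(hN i hi k hk).trans_le hNa, hSf i hk⟩
      refine ⟨w', h1, Submodule.span_mono (Set.image_mono hsub) h2, ?_⟩
      have h4 : 1 / (2 * ((a j' : ℝ) + 1)) / (2 * b.C) * (1 / 2) ^ (i + 1) * ‖y i‖ / 2 ≤ ε i / 2 := by
        rw [hε]
        simp only
        gcongr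
        linarith
      have h5 : io e w' - l'.getD i 0 = -(w i - io e w') + (w i - l'.getD i 0) := by abel
      rw [h5]
      refine (norm_add_le _ _).trans ?_
      rw [norm_neg]
      linarith [hwd i]
    choose! u₁ hu1 hu2 hu3 using hnew
    set u' : ℕ → Vq := fun i => if i < l.length then u i else u₁ i with hu'
    have hlenle : l.length ≤ l'.length := hpre.length_le
    have hEE : Submodule.span ℚ (x '' {i | i < a j ∧ al i}) ≤ Submodule.span ℚ (x '' {i | i < a j' ∧ al i}) :=
      Submodule.span_mono (Set.image_mono fun i hi => ⟨hi.1.trans haj, hi.2⟩)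
    have hu'p : ∀ i < l'.length, u' i ∈ H (a j') ∧ u' i ∈ Submodule.span ℚ (x '' {i | i < a j' ∧ al i}) ∧
        ‖io e (u' i) - l'.getD i 0‖ ≤ 1 / (2 * K) / (2 * b.C) * (1 / 2) ^ (i + 1) * ‖y i‖ := by
      intro i hi
      by_cases hil : i < l.length
      · have e1 : u' i = u i := if_pos hil
        have e2 : l'.getD i 0 = l.getD i 0 := by
          rw [List.getD_eq_getElem _ _ hi, List.getD_eq_getElem _ _ hil]
          exact (hpre.getElem hil).symm
        rw [e1, e2]
        obtain ⟨c1, c2, c3⟩ := hu i hil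
        exact ⟨hHm haj.le c1, hEE c2, c3⟩
      · have e1 : u' i = u₁ i := if_neg hil
        rw [e1]
        exact ⟨hu1 i hi, hu2 i hi, hu3 i hi⟩
    have hIH := ih η hη j' hj' (hKj.trans haj.le) l' u' hR' hla.le hu'p
    set F : SV := Submodule.span ℚ (x '' {i | B (a j) < i ∧ i < a j' ∧ al i}) with hF
    have hEF : Submodule.span ℚ (x '' {i | i < a j' ∧ al i}) ≤ Submodule.span ℚ (x '' {i | i < a j ∧ al i}) ⊔ F := by
      rw [hF, ← Submodule.span_union, ← Set.image_union]
      refine Submodule.span_mono (Set.image_mono ?_)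
      rintro i ⟨h1, h2⟩
      by_cases h3 : i < a j
      · exact Or.inl ⟨h3, h2⟩
      · right
        refine ⟨?_, h1, h2⟩
        by_contra h4
        exact (hal i).1 h2 j hj (Finset.mem_Icc.2 ⟨by omega, by omega⟩)
    refine hfail F _ ?_ ?_ ?_ ?_ ?_ ?_ (hIH.mono le_rfl (m := 0) inf_le_left hEF)
    · exact Submodule.fg_span (((Set.finite_Iio (a j')).subset fun i hi => hi.2.1).image x)
    · refine Submodule.span_le.2 ?_
      rintro _ ⟨i, hi, rfl⟩
      exact ⟨Submodule.subset_span ⟨i, rfl⟩, Tl_anti (hi.1.le.trans hx.1.le_apply) (hx.2 i).2.1⟩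
    · exact Submodule.fg_span ((Set.finite_Iio _).image _)
    · refine Submodule.span_le.2 ?_
      rintro _ ⟨i, hi, rfl⟩
      refine Submodule.subset_span ⟨i, lt_of_lt_of_le hi hlenle, ?_⟩
      have e1 : u' i = u i := if_pos hi
      simp only [e1]
    · refine hd.trans (Submodule.span_le.2 ?_)
      rintro _ ⟨i, hi, rfl⟩
      exact ⟨(y' i, u' i), Submodule.subset_span ⟨i, by rw [Set.mem_Iio] at hi ⊢; omega, rfl⟩, rfl⟩
    · refine le_trans ?_ hEF
      rw [Submodule.map_span, Submodule.span_le]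
      rintro _ ⟨_, ⟨i, hi, rfl⟩, rfl⟩
      exact (hu'p i hi).2.1

lemma nontight {e : ℕ → 𝒲} (b : BProj e) {p x} (hx : IsBlk p x) {α : Ordinal.{0}}
    (h : ¬ IsAlphaTight (fun k => io e (x k)) (Ordinal.omega0 * α)) :
    ∃ Y ≤ Submodule.span ℚ (Set.range x), Big Y ∧ ∃ K M : ℕ,
      PiG (fun v => ‖io e v‖) K Y (Submodule.span ℚ (Set.range x)) α (Hd M) ⊥ := by
  have hC := b.hC
  rw [IsAlphaTight] at h
  push Not at h
  obtain ⟨y, hyb, hI⟩ := h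
  obtain ⟨q, hy, y', hy1, hy2, hy'⟩ := approx b hx hyb
  have hyi : ∀ i, 0 < ‖y i‖ := fun i => norm_pos_iff.2 (hy.2 i).1
  refine ⟨Submodule.span ℚ (Set.range y'), Submodule.span_le.2 ?_, ?_, ?_⟩
  · rintro _ ⟨k, rfl⟩; exact hy1 k
  · intro n
    refine ⟨y' n, Submodule.subset_span ⟨n, rfl⟩, ?_, hy2 n⟩
    intro h0
    have := (hy' (n + 1) (fun k => if k = n then 1 else 0)).1
    simp only [ite_smul, one_smul, zero_smul, Finset.sum_ite_eq', Finset.mem_range, Nat.lt_succ_self, if_true, h0, map_zero, norm_zero] at this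
    linarith [hyi n]
  · obtain ⟨H, hHm, hH⟩ := net_all (e := e) x (fun a i => a * ‖y i‖)
      (fun a i => 1 / (2 * ((a : ℝ) + 1)) / (2 * b.C) * (1 / 2) ^ (i + 1) * ‖y i‖ / 2) (fun a i => by
        have := hyi i
        have : 0 < b.C := by linarith
        positivity)
    obtain ⟨B, hB⟩ := exists_B (N := fun v => ‖io e v‖) (Y := Submodule.span ℚ (Set.range y'))
      (X := Submodule.span ℚ (Set.range x)) x y' H
    let a : ℕ → ℕ := fun k => Nat.rec 0 (fun _ n => B n + 1) k
    have ha1 : ∀ k, a (k + 1) = B (a k) + 1 := fun k => rfl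
    have ha : StrictMono a := strictMono_nat_of_lt_succ fun k => by
      rw [ha1]; have := (hB (a k)).1; omega
    obtain ⟨A, hA, hem⟩ := hI (fun m => Finset.Icc (a m) (B (a m)))
      ⟨fun m => ⟨_, _, (hB _).1, rfl⟩, fun m i hi k hk => by
        rw [Finset.mem_Icc] at hi hk
        rw [ha1] at hk; omega⟩
    obtain ⟨K, hK, hR⟩ := embIndex_gt (not_le.2 hem)
    rw [residual_eq] at hR
    obtain ⟨K', hK'⟩ := exists_nat_ge (4 * K + 4)
    obtain ⟨j, hj, hjK⟩ := hA.exists_gt K'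
    have hja : j ≤ a j := ha.le_apply
    have := claim b hx hy hy' hK hK' hHm hH (fun a => (hB a).2) ha hA (fun i => Iff.rfl) α j hj (by omega) [] 0 hR
      (by simp) (by simp)
    refine ⟨K', p (a j), ?_⟩
    have h00 : Set.Iio ([] : List 𝒲).length = ∅ := by ext; simp
    rw [h00, Set.image_empty, Submodule.span_empty] at this
    refine this.mono le_rfl (m := 0) inf_le_left (Submodule.span_le.2 ?_)
    rintro _ ⟨i, hi, rfl⟩
    exact Hd_mono (hx.1.monotone hi.1) (hx.2 i).2.2

lemma hyp_H {e : ℕ → 𝒲} (b : BProj e) {α : Ordinal.{0}}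
    (h : ∀ p x, IsBlk p x → ¬ IsAlphaTight (fun k => io e (x k)) (Ordinal.omega0 * α)) (X : SV) (hX : Big X) :
    ∃ K : ℕ, Th (fun v => ‖io e v‖) K X α ⊥ ⊥ := by
  obtain ⟨p, x, hx, hxX⟩ := exists_IsBlk hX
  obtain ⟨Y, hYX, hY, K, M, hP⟩ := nontight b hx (h p x hx)
  have := shift b M (Nat.cast_nonneg K) hx.big hP
  obtain ⟨K', hK'⟩ := exists_nat_ge ((K : ℝ) * (4 * M * b.C ^ 2 + 1 + b.C))
  refine ⟨K', Y, hYX.trans hxX, hY, ?_⟩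
  exact (this.monoK (fun v => norm_nonneg _) hK').mono le_rfl (m := 0) (inf_le_left.trans hxX) le_rfl

end Rosendal

namespace Rosendal

variable {𝒲 : Type} [NormedAddCommGroup 𝒲] [NormedSpace ℝ 𝒲]

lemma inf_vec {e : ℕ → 𝒲} (b : BProj e) {Y : Submodule ℝ 𝒲} (hY : ¬ FiniteDimensional ℝ Y) (n : ℕ) :
    ∃ v ∈ Y, v ≠ 0 ∧ b.P n v = 0 := by
  by_contra hc
  push Not at hc
  apply hY
  have : FiniteDimensional ℝ (Submodule.span ℝ (e '' Set.Iio n)) :=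
    FiniteDimensional.span_of_finite ℝ ((Set.finite_Iio n).image e)
  let f : Y →ₗ[ℝ] Submodule.span ℝ (e '' Set.Iio n) :=
    LinearMap.codRestrict _ ((b.P n).toLinearMap.comp Y.subtype) (fun v => b.hfin n v)
  refine FiniteDimensional.of_injective f ?_
  rw [← LinearMap.ker_eq_bot, LinearMap.ker_eq_bot']
  intro v hv
  by_contra h0
  refine hc v.1 v.2 (fun h => h0 (Subtype.ext h)) ?_
  exact congrArg Subtype.val hv

lemma sub_vec {e : ℕ → 𝒲} (b : BProj e) {p x} (hx : IsBlk p x) {Y : Submodule ℝ 𝒲}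
    (hYs : (Y : Set 𝒲) ⊆ (closedSpan (Set.range (fun k => io e (x k))) : Set 𝒲))
    (hY : ¬ FiniteDimensional ℝ Y) (n : ℕ) {ε : ℝ} (hε : 0 < ε) (hε1 : ε ≤ 1) :
    ∃ w ∈ Submodule.span ℚ (Set.range x), w ≠ 0 ∧ w ∈ Tl n ∧ ∃ v ∈ Y, ‖v - io e w‖ ≤ ε * ‖io e w‖ := by
  classical
  have hC := b.hC
  obtain ⟨v, hvY, hv0, hPv⟩ := inf_vec b hY (p n)
  have hvn : 0 < ‖v‖ := norm_pos_iff.2 hv0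
  set η := ‖v‖ * ε / (2 * (2 + b.C)) with hη
  have hηp : 0 < η := by have : 0 < b.C := by linarith
                         positivity
  have hv := hYs hvY
  rw [← Set.image_univ] at hv
  obtain ⟨S, -, u, hu, hud⟩ := closedSpan_approx hv hηp
  obtain ⟨a, rfl⟩ := span_fin hu
  set u := ∑ i ∈ S, a i • io e (x i) with hudef
  set u' := ∑ i ∈ S with n ≤ i, a i • io e (x i) with hu'
  have hP : u' = u - b.P (p n) u := by
    rw [hudef, hu', map_sum, ← Finset.sum_sub_distrib, Finset.sum_filter]
    refine Finset.sum_congr rfl fun i _ => ?_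
    rw [map_smul]
    split_ifs with h
    · rw [P_tl b (hx.2 i).2.1 (hx.1.monotone h)]; simp
    · rw [P_hd b (hx.2 i).2.2 (hx.1.monotone (by omega))]; simp
  have h1 : ‖u' - v‖ ≤ (1 + b.C) * η := by
    have : u' - v = (u - v) - b.P (p n) (u - v) := by rw [hP, map_sub, hPv]; abel
    rw [this]
    refine (norm_sub_le _ _).trans ?_
    have := b.hP (p n) (u - v)
    have h3 : b.C * ‖u - v‖ ≤ b.C * η := mul_le_mul_of_nonneg_left hud.le (by linarith)
    linarith
  obtain ⟨r, hr⟩ := rat_approx (fun i => io e (x i)) (S.filter (n ≤ ·)) a hηp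
  set w : Vq := ∑ i ∈ S with n ≤ i, r i • x i with hw
  have hiw : io e w = ∑ i ∈ S with n ≤ i, (r i : ℝ) • io e (x i) := by
    rw [hw, map_sum]; simp [io_smul]
  have h2 : ‖u' - io e w‖ < η := by rw [hiw]; exact hr
  have h3 : ‖v - io e w‖ ≤ ε / 2 * ‖v‖ := by
    have e1 : v - io e w = -(u' - v) + (u' - io e w) := by abel
    have e2 : (2 + b.C) * η = ε / 2 * ‖v‖ := by
      rw [hη]; have : (2 + b.C) ≠ 0 := by linarith
      field_simp
    rw [e1, ← e2]
    refine (norm_add_le _ _).trans ?_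
    rw [norm_neg]; linarith
  have h4 : ‖v‖ ≤ 2 * ‖io e w‖ := by
    have := norm_sub_norm_le v (io e w)
    have h5 : ε / 2 * ‖v‖ ≤ 1 / 2 * ‖v‖ := by gcongr
    linarith
  refine ⟨w, ?_, ?_, ?_, v, hvY, ?_⟩
  · exact Submodule.sum_mem _ fun i _ => Submodule.smul_mem _ _ (Submodule.subset_span ⟨i, rfl⟩)
  · intro h0
    rw [h0, map_zero, norm_zero] at h4
    linarith
  · refine Submodule.sum_mem _ fun i hi => Submodule.smul_mem _ _ ?_
    exact Tl_anti ((Finset.mem_filter.1 hi).2.trans hx.1.le_apply) (hx.2 i).2.1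
  · refine h3.trans ?_
    nlinarith

lemma sub_blk {e : ℕ → 𝒲} (b : BProj e) {p x} (hx : IsBlk p x) {Y : Submodule ℝ 𝒲}
    (hYs : (Y : Set 𝒲) ⊆ (closedSpan (Set.range (fun k => io e (x k))) : Set 𝒲))
    (hY : ¬ FiniteDimensional ℝ Y) :
    ∃ (p' : ℕ → ℕ) (w : ℕ → Vq) (v : ℕ → 𝒲), IsBlk p' w ∧ (∀ k, w k ∈ Submodule.span ℚ (Set.range x)) ∧
      (∀ k, v k ∈ Y) ∧ ∀ c : Vq, ‖io (fun k => io e (w k)) c‖ ≤ 2 * ‖io v c‖ ∧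
        ‖io v c‖ ≤ 2 * ‖io (fun k => io e (w k)) c‖ := by
  have hC := b.hC
  obtain ⟨p', w, hp, hw⟩ := exists_block (fun k _ w => w ∈ Submodule.span ℚ (Set.range x) ∧
    ∃ v ∈ Y, ‖v - io e w‖ ≤ (1 / 2) / (2 * b.C) * (1 / 2) ^ (k + 1) * ‖io e w‖) (by
      intro k n
      obtain ⟨w, h1, h2, h3, h4⟩ := sub_vec b hx hYs hY n (ε := (1 / 2) / (2 * b.C) * (1 / 2) ^ (k + 1))
        (by have : 0 < b.C := by linarith
            positivity)
        (by
          have h3 : (1 / 2) / (2 * b.C) ≤ 1 := by rw [div_le_one (by linarith)]; linarith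
          exact mul_le_one₀ h3 (by positivity) (pow_le_one₀ (by norm_num) (by norm_num)))
      exact ⟨w, h2, h3, h1, h4⟩)
  choose hw0 hwT hwH hwx v hvY hv using hw
  have hblk : IsBlk p' w := ⟨hp, fun k => ⟨hw0 k, hwT k, hwH k⟩⟩
  refine ⟨p', w, v, hblk, hwx, hvY, fun c => ?_⟩
  obtain ⟨m, hm⟩ := exists_Hd c
  have := pert (D := 2 * b.C) (t := 1 / 2) (by linarith) (by norm_num) (k := m) (fun i => (c i : ℝ))
    (fun i hi => (hblk.rblk b).coef m (fun i => (c i : ℝ)) i hi) (d := fun i => v i - io e (w i)) (fun i _ => hv i)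
  simp only [smul_sub, Finset.sum_sub_distrib] at this
  rw [← io_hd v hm, ← io_hd (fun k => io e (w k)) hm] at this
  have n1 := norm_sub_norm_le (io v c) (io (fun k => io e (w k)) c)
  have n2 := norm_sub_norm_le (io (fun k => io e (w k)) c) (io v c)
  rw [norm_sub_rev] at n2
  have := norm_nonneg (io (fun k => io e (w k)) c)
  constructor <;> linarith

lemma minimal {e : ℕ → 𝒲} (b : BProj e) {p x} (hx : IsBlk p x) {α : Ordinal.{0}} {Y0 : SV} {K : ℝ} (hK : 1 ≤ K)
    (hxY : Submodule.span ℚ (Set.range x) ≤ Y0)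
    (hO : ∀ W ≤ Y0, Big W → OmG (fun v => ‖io e v‖) K Y0 W α ⊥) :
    IsAlphaMinimal (fun k => io e (x k)) (α + 1) := by
  intro z hz Y hYs hY
  obtain ⟨q, hzb, z', hz1, hz2, hz'⟩ := approx b hx hz
  obtain ⟨p', w, v, hw, hwx, hvY, hvw⟩ := sub_blk b hx hYs hY
  set W := Submodule.span ℚ (Set.range w) with hW
  have hWY : W ≤ Y0 := (Submodule.span_le.2 (by rintro _ ⟨k, rfl⟩; exact hwx k)).trans hxY
  have h0 := hO W hWY hw.big
  have hK4 : 1 ≤ 4 * K := by linarith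
  refine le_trans ?_ (le_embIndex hK4)
  refine le_rank (fun ξ l => ∃ (G : SG) (c : ℕ → Vq), OmG (fun v => ‖io e v‖) K Y0 W ξ G ∧
    ∀ i < l.length, (z' i, Finsupp.linearCombination ℚ w (c i)) ∈ G ∧ l.getD i 0 = io v (c i)) ?_ ⟨⊥, 0, h0, by simp⟩
  rintro ξ l ⟨G, c, hG, hc⟩
  rw [OmG] at hG
  refine ⟨⟨?_, ?_⟩, ?_⟩
  · intro s hs
    obtain ⟨i, hi, rfl⟩ := List.getElem_of_mem hs
    have := (hc i hi).2
    rw [List.getD_eq_getElem _ _ hi] at this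
    rw [this, io_sum]
    exact Y.sum_mem fun k _ => Y.smul_mem _ (hvY k)
  · have key : ∀ r : ℕ → ℚ,
        ‖∑ i ∈ Finset.range l.length, (r i : ℝ) • z i‖ ≤ 4 * K * ‖∑ i ∈ Finset.range l.length, (r i : ℝ) • l.getD i 0‖ ∧
        ‖∑ i ∈ Finset.range l.length, (r i : ℝ) • l.getD i 0‖ ≤ 4 * K * ‖∑ i ∈ Finset.range l.length, (r i : ℝ) • z i‖ := by
      intro r
      have hmem : (∑ i ∈ Finset.range l.length, r i • (z' i, Finsupp.linearCombination ℚ w (c i))) ∈ G :=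
        G.sum_mem fun i hi => G.smul_mem _ (hc i (Finset.mem_range.1 hi)).1
      obtain ⟨g1, g2⟩ := hG.1 _ hmem
      set C := ∑ i ∈ Finset.range l.length, r i • c i with hC
      have e1 : (∑ i ∈ Finset.range l.length, r i • (z' i, Finsupp.linearCombination ℚ w (c i))).1
          = ∑ i ∈ Finset.range l.length, r i • z' i := by rw [Prod.fst_sum]; simp
      have e2 : (∑ i ∈ Finset.range l.length, r i • (z' i, Finsupp.linearCombination ℚ w (c i))).2
          = Finsupp.linearCombination ℚ w C := by rw [Prod.snd_sum, hC, map_sum]; simp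
      have e3 : io e (∑ i ∈ Finset.range l.length, r i • z' i) = ∑ i ∈ Finset.range l.length, (r i : ℝ) • io e (z' i) := by
        rw [map_sum]; simp [io_smul]
      have e4 : ∑ i ∈ Finset.range l.length, (r i : ℝ) • l.getD i 0 = io v C := by
        rw [hC, map_sum]
        refine Finset.sum_congr rfl fun i hi => ?_
        rw [io_smul, (hc i (Finset.mem_range.1 hi)).2]
      simp only at g1 g2
      rw [e1, e2, e3, io_lc] at g1 g2
      rw [e4]
      obtain ⟨f1, f2⟩ := hz' l.length (fun i => (r i : ℝ))
      obtain ⟨f3, f4⟩ := hvw C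
      constructor
      · nlinarith
      · nlinarith
    intro a
    have r1 := rat_to_real (A := 1) (B := 4 * K) (s := z) (t := fun i => l.getD i 0) (k := l.length)
      (fun r => by rw [one_mul]; exact (key r).1) a
    have r2 := rat_to_real (A := 1) (B := 4 * K) (t := z) (s := fun i => l.getD i 0) (k := l.length)
      (fun r => by rw [one_mul]; exact (key r).2) a
    rw [one_mul] at r1 r2
    refine ⟨?_, r1⟩
    rw [one_div, inv_mul_le_iff₀ (by linarith)]
    exact r2
  · intro η hη
    obtain ⟨G', hGG, hS, hs, hO'⟩ := hG.2 η hη (Submodule.span ℚ {z' l.length}) (Submodule.fg_span (Set.finite_singleton _))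
      (Submodule.span_le.2 (by rintro _ rfl; exact hxY (hz1 _)))
    obtain ⟨⟨q1, q2⟩, hq, hq1⟩ := hS (Submodule.mem_span_singleton_self _)
    have hq1' : q1 = z' l.length := hq1
    subst hq1'
    have hq2 : q2 ∈ W := hs ⟨_, hq, rfl⟩
    obtain ⟨c', rfl⟩ := (Finsupp.mem_span_range_iff_exists_finsupp).1 hq2
    refine ⟨io v c', G', Function.update c l.length c', hO', ?_⟩
    intro i hi
    rw [List.length_append, List.length_singleton] at hi
    rcases Nat.lt_succ_iff_lt_or_eq.1 hi with h | rfl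
    · rw [Function.update_of_ne h.ne, List.getD_append _ _ _ _ h]
      exact ⟨hGG (hc i h).1, (hc i h).2⟩
    · rw [Function.update_self]
      refine ⟨hq, ?_⟩
      simp

lemma isBlockSeq_io {e : ℕ → 𝒲} (b : BProj e) {p x} (hx : IsBlk p x) : IsBlockSeq e (fun k => io e (x k)) := by
  refine ⟨fun n => io_ne b (hx.2 n).1, fun n => (x n).support, fun n => ⟨fun i => (x n i : ℝ), io_sum _ _⟩, ?_⟩
  intro n i hi j hj
  rw [Finsupp.mem_support_iff] at hi hj
  have h1 : i < p (n + 1) := by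
    by_contra h; exact hi ((hx.2 n).2.2 i (by omega))
  have h2 : p (n + 1) ≤ j := by
    by_contra h; exact hj ((hx.2 (n + 1)).2.1 j (by omega))
  omega

lemma countable_Iic_of {α : Ordinal.{0}} (hα : α < (Cardinal.aleph 1).ord) : Countable (Set.Iic α) := by
  have h1 : α.card < Cardinal.aleph 1 := Cardinal.lt_ord.1 hα
  have h2 : (Set.Iio α).Countable := by
    rw [← Cardinal.le_aleph0_iff_set_countable, Cardinal.mk_Iio_ordinal]
    rw [← Cardinal.lift_aleph0.{1,0}, Cardinal.lift_le]
    rw [← Order.lt_succ_iff, Cardinal.succ_aleph0]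
    exact h1
  have h3 : (Set.Iic α).Countable := by
    rw [← Set.Iio_insert]; exact h2.insert _
  exact h3.to_subtype

theorem main_aux
    (𝒲 : Type) [NormedAddCommGroup 𝒲] [NormedSpace ℝ 𝒲] [CompleteSpace 𝒲]
    (e : ℕ → 𝒲) (he : IsSchauderBasis e)
    (α : Ordinal) (hα : α < (Cardinal.aleph 1).ord) :
    ∃ x : ℕ → 𝒲, IsBlockSeq e x ∧
      (IsAlphaTight x (Ordinal.omega0 * α) ∨ IsAlphaMinimal x (α + 1)) := by
  obtain ⟨b⟩ := exists_BProj he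
  by_cases h : ∃ p x, IsBlk p x ∧ IsAlphaTight (fun k => io e (x k)) (Ordinal.omega0 * α)
  · obtain ⟨p, x, hx, ht⟩ := h
    exact ⟨_, isBlockSeq_io b hx, Or.inl ht⟩
  · push Not at h
    obtain ⟨Y, K, hK, hY, hO⟩ := core (fun v => ‖io e v‖) (fun v => norm_nonneg _) α (countable_Iic_of hα) (hyp_H b h)
    obtain ⟨p, x, hx, hxY⟩ := exists_IsBlk hY
    exact ⟨_, isBlockSeq_io b hx, Or.inr (minimal b hx hK hxY hO)⟩

end Rosendal

namespace Rosendal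

/-- If `𝒲` is a Banach space with a Schauder basis and `α` is a countable
ordinal, then there is a block subspace `𝒳 = [x n] ⊆ 𝒲` that is either `ω·α`-tight or
`(α+1)`-minimal. -/
theorem exists_tight_or_minimal_block_subspace
    (𝒲 : Type) [NormedAddCommGroup 𝒲] [NormedSpace ℝ 𝒲] [CompleteSpace 𝒲]
    (e : ℕ → 𝒲) (he : IsSchauderBasis e)
    (α : Ordinal) (hα : α < (Cardinal.aleph 1).ord) :
    ∃ x : ℕ → 𝒲, IsBlockSeq e x ∧
      (IsAlphaTight x (Ordinal.omega0 * α) ∨ IsAlphaMinimal x (α + 1)) := by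
  exact main_aux 𝒲 e he α hα

end Rosendal
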